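/- arXiv:1902.01110 — 3 statements merged into one kernel-verified Lean document; each statement's English description precedes it below -/
import Mathlib

section
/- Let G = (V, c) be an infinite, connected weighted graph with a finite exhaustion (V_n), and let x, y ∈ V_n with x ≠ y. Then for every path γ ∈ Γ_{G_n}(x,y), one has P^n_x(γ) = (c_x/(c_n)_x) · Σ_{γ̄ ∈ π^{-1}(γ)} P̄^n_x(γ̄), where π is the projection from Γ_{Ḡ_n}(x,y) onto Γ_{G_n}(x,y) that deletes from a path all steps of the form (v̄, v) (i.e. every visit to a boundary copy v̄ together with the forced return to v). -/
/-!
Fix a path `γ = x :: m ++ [y]` of the induced graph on `A`. A path of the extended graph lies over `γ`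
exactly when it is obtained from `γ` by inserting, at each vertex `v` of the interior `m`, some number
`k` of excursions `v → v̄ → v`. No excursion is possible at `x` or `y`, because the interior of a path
avoids both endpoints.

Write `b` for the total weight leaving `A` at `v`, so that `deg v = degIn v + b`. An excursion from `v`
has probability `b / deg v`, so summing over `k` multiplies the following step `c v u / deg v` by
`(1 - b / deg v)⁻¹ = deg v / degIn v`, which gives the step `c v u / degIn v` of the induced walk
(`geometric_mul_extTrans`). Only the step out of `x` receives no such factor; this is the prefactor
`deg x / degIn x`.

The set `lifts y m` consists of all these lifts, with the initial `x` removed, including those which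
make excursions to isolated copies. The latter are not paths, but they have probability zero.
`tsum_pathProb_lifts` sums over `lifts y m` by induction on `m`. That every path in the fibre of `γ`
is a lift is `exists_mem_lifts`; that lifts of positive probability lie in the fibre follows from
`lifts_mem` and `projPath_lifts`.
-/

open MeasureTheory Filter Topology Classical
open scoped ENNReal

noncomputable section

/-- A weighted graph on an (at most countable) vertex set `V`. -/
structure WeightedGraph (V : Type) where
  c : V → V → ℝ
  nonneg : ∀ x y, 0 ≤ c x y
  symm : ∀ x y, c x y = c y x
  loopless : ∀ x, c x x = 0
  row_summable : ∀ x, Summable (c x)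

namespace WeightedGraph

variable {V : Type}

/-- adjacency: positive weight -/
def Adj (G : WeightedGraph V) (x y : V) : Prop := 0 < G.c x y

/-- connectivity of a weighted graph -/
def Connected (G : WeightedGraph V) : Prop :=
  ∀ x y : V, Relation.ReflTransGen G.Adj x y

/-- `c_x`, the total weight at `x` -/
def deg (G : WeightedGraph V) (x : V) : ℝ := ∑' y, G.c x y

/-- `p(x,y) = c(x,y)/c_x`, the transition matrix of the random walk on `G` -/
def trans (G : WeightedGraph V) (x y : V) : ℝ := G.c x y / G.deg x

/-- `G` is a subgraph of an infinite line -/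
def IsSubgraphOfLine (G : WeightedGraph V) : Prop :=
  ∃ f : V → ℤ, Function.Injective f ∧ ∀ x y : V, 0 < G.c x y → |f x - f y| = 1

/-- weights of the induced subgraph on a finite vertex set `A` -/
def restrictW (G : WeightedGraph V) (A : Finset V) (x y : V) : ℝ :=
  if x ∈ A ∧ y ∈ A then G.c x y else 0

/-- `(c_n)_x`, the degree inside `A` -/
def degIn (G : WeightedGraph V) (A : Finset V) (x : V) : ℝ := ∑ y ∈ A, G.c x y

/-- `p_n`, transition matrix of the induced walk (zero outside of `A`) -/
def transIn (G : WeightedGraph V) (A : Finset V) (x y : V) : ℝ :=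
  restrictW G A x y / degIn G A x

/-- the inner boundary `∂ᵢA` -/
def innerBoundary (G : WeightedGraph V) (A : Finset V) : Set V :=
  {v | v ∈ A ∧ ∃ w, w ∉ A ∧ 0 < G.c v w}

/-- weights `c̄ₙ` of the extended graph `Ḡₙ`, realized on `V ⊕ V` where `Sum.inr v`
plays the role of the boundary copy `v̄`. -/
def extW (G : WeightedGraph V) (A : Finset V) : V ⊕ V → V ⊕ V → ℝ
  | Sum.inl x, Sum.inl y => if x ∈ A ∧ y ∈ A then G.c x y else 0
  | Sum.inl v, Sum.inr w => if v = w ∧ v ∈ A then ∑' z, (if z ∈ A then 0 else G.c v z) else 0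
  | Sum.inr w, Sum.inl v => if v = w ∧ v ∈ A then ∑' z, (if z ∈ A then 0 else G.c v z) else 0
  | Sum.inr _, Sum.inr _ => 0

/-- `(c̄ₙ)_s` -/
def extDeg (G : WeightedGraph V) (A : Finset V) (s : V ⊕ V) : ℝ := ∑' t, extW G A s t

/-- `p̄ₙ`, the transition matrix of the random walk on the extended graph -/
def extTrans (G : WeightedGraph V) (A : Finset V) (s t : V ⊕ V) : ℝ :=
  extW G A s t / extDeg G A s

/-- the set `Vₙ* = V̄ₙ ∖ Vₙ` of boundary copies, as a subset of `V ⊕ V` -/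
def boundaryCopies (G : WeightedGraph V) (A : Finset V) : Set (V ⊕ V) :=
  {s | ∃ v ∈ innerBoundary G A, s = Sum.inr v}

/-- a finite exhaustion whose induced subgraphs are connected -/
def IsExhaustion (G : WeightedGraph V) (Vn : ℕ → Finset V) : Prop :=
  (∀ n, Vn n ⊆ Vn (n + 1)) ∧ (∀ x : V, ∃ n, x ∈ Vn n) ∧
    ∀ n, ∀ x ∈ Vn n, ∀ y ∈ Vn n,
      Relation.ReflTransGen (fun a b => a ∈ Vn n ∧ b ∈ Vn n ∧ 0 < G.c a b) x y

end WeightedGraph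

/-- the first hitting time `τ_A` of a set `A` (`⊤` if `A` is never visited) -/
def hitTime {S : Type} (A : Set S) (ω : ℕ → S) : ℕ∞ :=
  sInf {n : ℕ∞ | ∃ k : ℕ, (k : ℕ∞) = n ∧ ω k ∈ A}

/-- the hitting time `τ_A⁺` of a set `A` after time zero -/
def hitTime1 {S : Type} (A : Set S) (ω : ℕ → S) : ℕ∞ :=
  sInf {n : ℕ∞ | ∃ k : ℕ, 1 ≤ k ∧ (k : ℕ∞) = n ∧ ω k ∈ A}

/-- the product σ-algebra `(2^S)^{⊗ℕ}` on the trajectory space `S^{ℕ₀}` -/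
def trajMS (S : Type) : MeasurableSpace (ℕ → S) :=
  @MeasurableSpace.pi ℕ (fun _ => S) (fun _ => ⊤)

/-- measures on the trajectory space -/
abbrev TrajMeasure (S : Type) := @MeasureTheory.Measure (ℕ → S) (trajMS S)

/-- `μ` is (the law of) the Markov chain with transition matrix `p` and initial
distribution `δ_x`: a probability measure with the prescribed cylinder probabilities. -/
def IsRandomWalk {S : Type} (p : S → S → ℝ) (x : S) (μ : TrajMeasure S) : Prop :=
  μ Set.univ = 1 ∧
    ∀ (n : ℕ) (f : ℕ → S),
      μ {ω | ∀ k ≤ n, ω k = f k} =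
        (if f 0 = x then 1 else 0) *
          ∏ k ∈ Finset.range n, ENNReal.ofReal (p (f k) (f (k + 1)))

/-- the family of walks `P` is recurrent: `P_x[τ_x⁺ < ∞] = 1` for every start `x` -/
def IsRecurrentFamily {V : Type} (P : V → TrajMeasure V) : Prop :=
  ∀ x : V, P x {ω | hitTime1 {x} ω < ⊤} = 1

/-- `l` is a path `x → y` with respect to the weight function `w`: it starts at `x`,
ends at `y`, has positive weights along all of its steps, and avoids `x` and `y`
in its interior. -/
def IsPathBetween {S : Type} (w : S → S → ℝ) (x y : S) (l : List S) : Prop :=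
  2 ≤ l.length ∧ l.head? = some x ∧ l.getLast? = some y ∧
    l.Chain' (fun a b => 0 < w a b) ∧
    ∀ (i : ℕ) (h : i < l.length), 0 < i → i + 1 < l.length →
      l.get ⟨i, h⟩ ≠ x ∧ l.get ⟨i, h⟩ ≠ y

/-- the probability of a finite path: the product of the transition probabilities
along its steps -/
def pathProb {S : Type} (p : S → S → ℝ) (l : List S) : ℝ≥0∞ :=
  ENNReal.ofReal (((l.zip l.tail).map fun q => p q.1 q.2).prod)

/-- the projection `π` which removes all steps of the form `(v̄, v)`, i.e. collapses
every excursion `(v, v̄, v)` to a boundary copy to the single vertex `v` -/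
def projPath {V : Type} (l : List (V ⊕ V)) : List V :=
  List.destutter (· ≠ ·) (l.filterMap Sum.getLeft?)

end

namespace WeightedGraph

variable {V : Type}

/-! ### Degrees in the extended graph -/

/-- The weight `c̄ₙ(v, v̄)` of the edge from `v` to its copy: the total weight leaving `A` at `v`. -/
noncomputable def outDeg (G : WeightedGraph V) (A : Finset V) (v : V) : ℝ :=
  ∑' z, (if z ∈ A then 0 else G.c v z)

lemma outDeg_nonneg (G : WeightedGraph V) (A : Finset V) (v : V) : 0 ≤ G.outDeg A v :=
  tsum_nonneg fun z => by split_ifs; exacts [le_rfl, G.nonneg _ _]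

lemma degIn_nonneg (G : WeightedGraph V) (A : Finset V) (v : V) : 0 ≤ G.degIn A v :=
  Finset.sum_nonneg fun _ _ => G.nonneg _ _

lemma deg_eq (G : WeightedGraph V) (A : Finset V) (v : V) :
    G.deg v = G.degIn A v + G.outDeg A v := by
  have h1 : HasSum (fun z => if z ∈ A then G.c v z else 0) (G.degIn A v) := by
    have := hasSum_sum_of_ne_finset_zero (f := fun z => if z ∈ A then G.c v z else 0) (s := A)
      (L := .unconditional V)
      (fun b hb => by simp [hb])
    rwa [Finset.sum_congr rfl (fun z hz => if_pos hz)] at this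
  have h2 : HasSum (fun z => if z ∈ A then 0 else G.c v z) (G.outDeg A v) := by
    refine Summable.hasSum (Summable.of_nonneg_of_le (fun z => ?_) (fun z => ?_)
      (G.row_summable v)) <;> split_ifs <;> simp [G.nonneg]
  rw [← (h1.add h2).tsum_eq]
  refine tsum_congr fun z => ?_
  split_ifs <;> simp

lemma degIn_pos (G : WeightedGraph V) {A : Finset V} {u v : V} (h : 0 < G.restrictW A u v) :
    u ∈ A ∧ 0 < G.degIn A u := by
  unfold restrictW at h
  split_ifs at h with hA
  · exact ⟨hA.1, h.trans_le (Finset.single_le_sum (fun z _ => G.nonneg u z) hA.2)⟩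
  · exact absurd h (lt_irrefl _)

lemma extDeg_inl (G : WeightedGraph V) {A : Finset V} {v : V} (hv : v ∈ A) :
    G.extDeg A (Sum.inl v) = G.deg v := by
  rw [G.deg_eq A v]
  refine (HasSum.sum ?_ ?_).tsum_eq
  · have := hasSum_sum_of_ne_finset_zero (f := G.extW A (Sum.inl v) ∘ Sum.inl) (s := A)
      (L := .unconditional V)
      (fun b hb => by simp [extW, hb])
    rwa [Finset.sum_congr rfl (g := G.c v) (fun z hz => by simp [extW, hv, hz])] at this
  · convert hasSum_single (f := G.extW A (Sum.inl v) ∘ Sum.inr) v ?_ using 1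
    · simp [extW, hv, outDeg]
    · intro b hb
      simp [extW, hb.symm]

lemma extDeg_inr (G : WeightedGraph V) {A : Finset V} {v : V} (hv : v ∈ A) :
    G.extDeg A (Sum.inr v) = G.outDeg A v := by
  unfold extDeg
  rw [tsum_eq_single (Sum.inl v)]
  · simp [extW, hv, outDeg]
  · rintro (u | u) hu
    · have : u ≠ v := fun h => hu (by rw [h])
      simp [extW, this]
    · rfl

lemma extW_nonneg (G : WeightedGraph V) (A : Finset V) (s t : V ⊕ V) : 0 ≤ G.extW A s t := by
  have h := fun v => G.outDeg_nonneg A v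
  unfold outDeg at h
  rcases s with s | s <;> rcases t with t | t <;> simp only [extW] <;> (try split_ifs) <;>
    simp [G.nonneg, h]

lemma extTrans_nonneg (G : WeightedGraph V) (A : Finset V) (s t : V ⊕ V) :
    0 ≤ G.extTrans A s t :=
  div_nonneg (G.extW_nonneg A s t) (tsum_nonneg fun t => G.extW_nonneg A s t)

lemma transIn_nonneg (G : WeightedGraph V) (A : Finset V) (u v : V) : 0 ≤ G.transIn A u v := by
  refine div_nonneg ?_ (G.degIn_nonneg A u)
  unfold restrictW
  split_ifs
  exacts [G.nonneg _ _, le_rfl]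

lemma extTrans_inl_inl (G : WeightedGraph V) {A : Finset V} {u : V} (v : V) (hu : u ∈ A) :
    G.extTrans A (Sum.inl u) (Sum.inl v) = G.restrictW A u v / G.deg u := by
  rw [extTrans, extDeg_inl G hu]; rfl

/-- The probability of the excursion `v → v̄ → v`. -/
lemma extTrans_excursion (G : WeightedGraph V) {A : Finset V} {v : V} (hv : v ∈ A) :
    G.extTrans A (Sum.inl v) (Sum.inr v) * G.extTrans A (Sum.inr v) (Sum.inl v) =
      G.outDeg A v / G.deg v := by
  have h1 : G.extW A (Sum.inl v) (Sum.inr v) = G.outDeg A v := by simp [extW, outDeg, hv]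
  have h2 : G.extW A (Sum.inr v) (Sum.inl v) = G.outDeg A v := by simp [extW, outDeg, hv]
  rw [extTrans, extTrans, extDeg_inl G hv, extDeg_inr G hv, h1, h2]
  -- if the copy is isolated then both sides vanish
  rcases eq_or_ne (G.outDeg A v) 0 with h | h
  · simp [h]
  · rw [div_self h, mul_one]

/-- Summing over the number of excursions `v → v̄ → v` before the step `v → u` turns the transition
probability of the extended walk into that of the induced walk. -/
lemma geometric_mul_extTrans (G : WeightedGraph V) {A : Finset V} {u v : V}
    (h : 0 < G.restrictW A v u) :
    (∑' k : ℕ, ENNReal.ofReal (G.outDeg A v / G.deg v) ^ k) *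
      ENNReal.ofReal (G.extTrans A (Sum.inl v) (Sum.inl u)) =
    ENNReal.ofReal (G.transIn A v u) := by
  obtain ⟨hv, hd⟩ := G.degIn_pos h
  have ho := G.outDeg_nonneg A v
  have hD : 0 < G.deg v := by rw [G.deg_eq A v]; linarith
  have hq : 1 - G.outDeg A v / G.deg v = G.degIn A v / G.deg v := by
    rw [eq_div_iff hD.ne', sub_mul, div_mul_cancel₀ _ hD.ne', G.deg_eq A v]; ring
  rw [ENNReal.tsum_geometric, ← ENNReal.ofReal_one,
    ← ENNReal.ofReal_sub _ (div_nonneg ho hD.le), hq,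
    ← ENNReal.ofReal_inv_of_pos (div_pos hd hD),
    ← ENNReal.ofReal_mul (inv_nonneg.2 (div_pos hd hD).le), extTrans_inl_inl G u hv, transIn]
  congr 1
  field_simp

end WeightedGraph

/-! ### Path probabilities -/

lemma pathProb_singleton {S : Type} (p : S → S → ℝ) (a : S) : pathProb p [a] = 1 := by
  simp [pathProb]

lemma pathProb_cons_cons {S : Type} {p : S → S → ℝ} (hp : ∀ a b, 0 ≤ p a b) (a b : S)
    (l : List S) :
    pathProb p (a :: b :: l) = ENNReal.ofReal (p a b) * pathProb p (b :: l) := by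
  simp [pathProb, ENNReal.ofReal_mul (hp a b)]

lemma isChain_of_pathProb_ne_zero {S : Type} {p : S → S → ℝ} (hp : ∀ a b, 0 ≤ p a b) :
    ∀ l : List S, pathProb p l ≠ 0 → l.IsChain fun a b => 0 < p a b
  | [], _ => .nil
  | [a], _ => .singleton a
  | a :: b :: l, h => by
    rw [pathProb_cons_cons hp, mul_ne_zero_iff] at h
    refine List.isChain_cons_cons.2 ⟨?_, isChain_of_pathProb_ne_zero hp _ h.2⟩
    by_contra hab
    exact h.1 (ENNReal.ofReal_of_nonpos (not_lt.1 hab))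

/-- A path `x → y` is `x :: m ++ [y]`, where the interior `m` avoids both
endpoints. -/
lemma isPathBetween_iff {S : Type} (w : S → S → ℝ) {x y : S} (l : List S) :
    IsPathBetween w x y l ↔ ∃ m : List S, l = x :: (m ++ [y]) ∧
      l.IsChain (fun a b => 0 < w a b) ∧ ∀ a ∈ m, a ≠ x ∧ a ≠ y := by
  constructor
  · rintro ⟨h2, hh, hl, hc, hi⟩
    rcases l with _ | ⟨a, l⟩
    · simp at h2
    rcases List.eq_nil_or_concat l with rfl | ⟨m, b, rfl⟩
    · simp at h2
    simp only [List.head?_cons, Option.some.injEq] at hh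
    rw [List.concat_eq_append] at *
    have hb : b = y := by
      rwa [← List.cons_append, List.getLast?_concat, Option.some.injEq] at hl
    subst hh hb
    refine ⟨m, rfl, hc, fun c hcm => ?_⟩
    obtain ⟨i, him, rfl⟩ := List.getElem_of_mem hcm
    have := hi (i + 1) (by simp; omega) (by omega) (by simp; omega)
    simpa [List.getElem_append_left him] using this
  · rintro ⟨m, rfl, hc, hm⟩
    refine ⟨by simp, rfl, by rw [← List.cons_append, List.getLast?_concat], hc, fun i h h0 h1 => ?_⟩
    obtain ⟨j, rfl⟩ : ∃ j, i = j + 1 := ⟨i - 1, by omega⟩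
    have hj : j < m.length := by simp at h1; omega
    simpa [List.getElem_append_left hj] using hm _ (List.getElem_mem hj)

/-! ### Lifts of a path to the extended graph -/

/-- The list `v, v̄, v, v̄, …, v, v̄, t` with `k` excursions from `v`, placed in front of `t`. -/
def excursions {V : Type} (v : V) (t : List (V ⊕ V)) : ℕ → List (V ⊕ V)
  | 0 => t
  | k + 1 => Sum.inl v :: Sum.inr v :: excursions v t k

/-- The lifts of the path `m ++ [y]`: each vertex of `m` is followed by an arbitrary number of
excursions to its copy, the endpoint `y` by none. -/
def lifts {V : Type} (y : V) : List V → Set (List (V ⊕ V))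
  | [] => {[Sum.inl y]}
  | v :: m => {l | ∃ k, ∃ t ∈ lifts y m, l = excursions v (Sum.inl v :: t) k}

section Lifts

variable {V : Type}

/-- The first vertex of `m ++ [y]`. -/
def firstOf (y : V) : List V → V
  | [] => y
  | v :: _ => v

lemma append_eq_firstOf (y : V) (m : List V) : ∃ r, m ++ [y] = firstOf y m :: r := by
  cases m <;> exact ⟨_, rfl⟩

lemma lifts_head {y : V} {m : List V} {t : List (V ⊕ V)} (ht : t ∈ lifts y m) :
    ∃ s, t = Sum.inl (firstOf y m) :: s := by
  rcases m with _ | ⟨v, m⟩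
  · exact ⟨[], ht⟩
  · obtain ⟨k, t, -, rfl⟩ := ht
    cases k <;> exact ⟨_, rfl⟩

lemma lifts_mem {y : V} {m : List V} {t : List (V ⊕ V)} (ht : t ∈ lifts y m) :
    ∃ s, t = s ++ [Sum.inl y] ∧ ∀ a, Sum.inl a ∈ s → a ∈ m := by
  induction m generalizing t with
  | nil => exact ⟨[], ht, by simp⟩
  | cons v m ih =>
    obtain ⟨k, t, ht, rfl⟩ := ht
    induction k with
    | zero =>
      obtain ⟨s, rfl, hs⟩ := ih ht
      refine ⟨Sum.inl v :: s, rfl, fun a ha => ?_⟩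
      rcases List.mem_cons.1 ha with h | h
      · simp [Sum.inl.inj h]
      · exact List.mem_cons_of_mem _ (hs a h)
    | succ k ihk =>
      obtain ⟨s, hs, hm⟩ := ihk
      refine ⟨Sum.inl v :: Sum.inr v :: s, by simp [excursions, hs], fun a ha => ?_⟩
      rcases List.mem_cons.1 ha with h | h
      · simp [Sum.inl.inj h]
      · rcases List.mem_cons.1 h with h | h
        · cases h
        · exact hm a h

lemma projPath_cons_cons_of_ne {u v : V} (h : v ≠ u) (t : List (V ⊕ V)) :
    projPath (Sum.inl v :: Sum.inl u :: t) = v :: projPath (Sum.inl u :: t) := by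
  simp [projPath, List.destutter_cons', List.destutter'_cons_pos, h]

lemma projPath_excursion (v : V) (t : List (V ⊕ V)) :
    projPath (Sum.inl v :: Sum.inr v :: Sum.inl v :: t) = projPath (Sum.inl v :: t) := by
  change List.destutter (· ≠ ·) (v :: v :: t.filterMap Sum.getLeft?) =
    List.destutter (· ≠ ·) (v :: t.filterMap Sum.getLeft?)
  rw [List.destutter_cons', List.destutter_cons', List.destutter'_cons_neg]
  simp

lemma projPath_lifts {y : V} {m : List V} (hm : (m ++ [y]).IsChain (· ≠ ·))
    {t : List (V ⊕ V)} (ht : t ∈ lifts y m) : projPath t = m ++ [y] := by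
  induction m generalizing t with
  | nil => rw [show t = _ from ht]; simp [projPath]
  | cons v m ih =>
    obtain ⟨k, t, ht, rfl⟩ := ht
    obtain ⟨s, rfl⟩ := lifts_head ht
    induction k with
    | zero =>
      obtain ⟨r, hr⟩ := append_eq_firstOf y m
      rw [List.cons_append, hr, List.isChain_cons_cons] at hm
      rw [excursions, projPath_cons_cons_of_ne hm.1, ih (hr ▸ hm.2) ht]
      rfl
    | succ k ihk =>
      rw [← ihk]
      cases k <;> exact projPath_excursion v _

/-- Every path of the extended graph that starts in `V` and ends at its first visit to `y` is a lift
of its projection. -/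
lemma exists_mem_lifts (G : WeightedGraph V) (A : Finset V) {y : V} :
    ∀ (v : V) (l : List (V ⊕ V)), (Sum.inl v :: l).IsChain (fun a b => 0 < G.extW A a b) →
      (∃ s, Sum.inl v :: l = s ++ [Sum.inl y] ∧ Sum.inl y ∉ s) →
      ∃ m, projPath (Sum.inl v :: l) = m ++ [y] ∧ Sum.inl v :: l ∈ lifts y m
  | v, [], _, ⟨s, hs, _⟩ => by
    rcases s with _ | ⟨a, s⟩
    · simp only [List.nil_append, List.cons.injEq, Sum.inl.injEq, and_true] at hs
      subst hs
      exact ⟨[], by simp [projPath], rfl⟩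
    · simp at hs
  | v, Sum.inl u :: l, hc, ⟨s, hs, hy⟩ => by
    rcases s with _ | ⟨a, s⟩
    · simp at hs
    rw [List.isChain_cons_cons] at hc
    have hvu : v ≠ u := by
      rintro rfl
      have := hc.1
      simp [WeightedGraph.extW, G.loopless] at this
    simp only [List.cons_append, List.cons.injEq] at hs
    obtain ⟨m, hm, hl⟩ := exists_mem_lifts G A u l hc.2
      ⟨s, hs.2, fun h => hy (List.mem_cons_of_mem _ h)⟩
    exact ⟨v :: m, by rw [projPath_cons_cons_of_ne hvu, hm]; rfl, 0, _, hl, rfl⟩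
  | v, [Sum.inr u], _, ⟨s, hs, _⟩ => by
    have := congrArg List.getLast? hs
    simp at this
  | v, Sum.inr u :: Sum.inr u' :: l, hc, _ => by
    have := (List.isChain_cons_cons.1 (List.isChain_cons_cons.1 hc).2).1
    simp [WeightedGraph.extW] at this
  | v, Sum.inr u :: Sum.inl u' :: l, hc, ⟨s, hs, hy⟩ => by
    rw [List.isChain_cons_cons, List.isChain_cons_cons] at hc
    obtain ⟨h1, h2, hc⟩ := hc
    obtain rfl : v = u := by
      by_contra h
      simp [WeightedGraph.extW, h] at h1
    obtain rfl : u' = v := by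
      by_contra h
      simp [WeightedGraph.extW, h] at h2
    rcases s with _ | ⟨a, _ | ⟨b, s⟩⟩
    · simp at hs
    · simp at hs
    simp only [List.cons_append, List.cons.injEq] at hs
    obtain ⟨rfl, rfl, hs⟩ := hs
    obtain ⟨m, hm, hl⟩ := exists_mem_lifts G A u' l hc
      ⟨s, hs, fun h => hy (by simp [h])⟩
    rcases m with _ | ⟨w, m⟩
    · -- the excursion started at `y`, before the end of the path
      obtain ⟨_, h⟩ := lifts_head hl
      simp only [firstOf, List.cons.injEq, Sum.inl.injEq] at h
      exact absurd (by simp [h.1]) hy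
    · obtain ⟨_, h⟩ := lifts_head hl
      simp only [firstOf, List.cons.injEq, Sum.inl.injEq] at h
      obtain ⟨k, t, ht, he⟩ := hl
      obtain ⟨rfl, -⟩ := h
      exact ⟨u' :: m, by rw [projPath_excursion, hm], k + 1, t, ht, by rw [he]; rfl⟩

/-- The number of excursions and the remaining lift are determined by the whole list, since a lift
starts in `V` and not at a copy. -/
lemma excursions_injective {v : V} {t t' : List (V ⊕ V)} {u u' : V} {k k' : ℕ}
    (h : excursions v (Sum.inl v :: Sum.inl u :: t) k =
      excursions v (Sum.inl v :: Sum.inl u' :: t') k') :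
    k = k' ∧ Sum.inl u :: t = Sum.inl u' :: t' := by
  induction k generalizing k' with
  | zero =>
    cases k' with
    | zero => simpa [excursions] using h
    | succ k' => simp [excursions] at h
  | succ k ih =>
    cases k' with
    | zero => simp [excursions] at h
    | succ k' =>
      simp only [excursions, List.cons.injEq, true_and] at h
      exact ⟨congrArg _ (ih h).1, (ih h).2⟩

lemma tsum_lifts_cons (y v : V) (m : List V) (f : List (V ⊕ V) → ℝ≥0∞) :
    ∑' l : lifts y (v :: m), f l =
      ∑' (k : ℕ) (t : lifts y m), f (excursions v (Sum.inl v :: t) k) := by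
  rw [← ENNReal.tsum_prod (f := fun k (t : lifts y m) => f (excursions v (Sum.inl v :: t) k))]
  symm
  refine (Equiv.ofBijective (fun q : ℕ × lifts y m =>
    (⟨excursions v (Sum.inl v :: q.2.1) q.1, q.1, q.2.1, q.2.2, rfl⟩ : lifts y (v :: m)))
    ⟨?_, ?_⟩).tsum_eq (fun l => f l.1)
  · rintro ⟨k, t, ht⟩ ⟨k', t', ht'⟩ h
    obtain ⟨s, rfl⟩ := lifts_head ht
    obtain ⟨s', rfl⟩ := lifts_head ht'
    obtain ⟨rfl, h'⟩ := excursions_injective (Subtype.mk.inj h)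
    exact Prod.ext rfl (Subtype.ext h')
  · rintro ⟨l, k, t, ht, rfl⟩
    exact ⟨(k, ⟨t, ht⟩), rfl⟩

lemma pathProb_excursions (G : WeightedGraph V) {A : Finset V} {v : V} (hv : v ∈ A)
    (t : List (V ⊕ V)) (k : ℕ) :
    pathProb (G.extTrans A) (excursions v (Sum.inl v :: t) k) =
      ENNReal.ofReal (G.outDeg A v / G.deg v) ^ k *
        pathProb (G.extTrans A) (Sum.inl v :: t) := by
  have hp := G.extTrans_nonneg A
  induction k with
  | zero => simp [excursions]
  | succ k ih =>
    rw [pow_succ', mul_assoc, ← ih, ← G.extTrans_excursion hv, ENNReal.ofReal_mul (hp _ _),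
      mul_assoc]
    cases k <;> simp only [excursions, pathProb_cons_cons hp]

/-- The lifts of a path of the induced graph have, in total, the probability of that path. -/
lemma tsum_pathProb_lifts (G : WeightedGraph V) (A : Finset V) (y : V) (m : List V)
    (hm : (m ++ [y]).IsChain fun a b => 0 < G.restrictW A a b) :
    ∑' t : lifts y m, pathProb (G.extTrans A) t = pathProb (G.transIn A) (m ++ [y]) := by
  induction m with
  | nil =>
    simp only [lifts, List.nil_append, pathProb_singleton]
    rw [tsum_singleton ([Sum.inl y] : List (V ⊕ V)) (pathProb (G.extTrans A)), pathProb_singleton]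
  | cons v m ih =>
    obtain ⟨r, hr⟩ := append_eq_firstOf y m
    rw [List.cons_append, hr, List.isChain_cons_cons] at hm
    have hstep : ∀ t : lifts y m, pathProb (G.extTrans A) (Sum.inl v :: t.1) =
        ENNReal.ofReal (G.extTrans A (Sum.inl v) (Sum.inl (firstOf y m))) *
          pathProb (G.extTrans A) t.1 := by
      rintro ⟨t, ht⟩
      obtain ⟨s, rfl⟩ := lifts_head ht
      exact pathProb_cons_cons (G.extTrans_nonneg A) _ _ _
    rw [tsum_lifts_cons, List.cons_append, hr, pathProb_cons_cons (G.transIn_nonneg A),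
      ← G.geometric_mul_extTrans hm.1, ← hr, ← ih (hr ▸ hm.2)]
    simp only [pathProb_excursions G (G.degIn_pos hm.1).1, hstep, ENNReal.tsum_mul_left,
      ENNReal.tsum_mul_right, mul_assoc]

end Lifts

/-- For an infinite, connected weighted graph `G` with finite
exhaustion `(Vₙ)` and distinct `x, y ∈ Vₙ`: for every path `γ ∈ Γ_{Gₙ}(x,y)`,
`Pⁿ_x(γ) = (c_x/(cₙ)_x) · Σ_{γ̄ ∈ π⁻¹(γ)} P̄ⁿ_x(γ̄)`, where `π` deletes all steps
of the form `(v̄, v)`. -/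
theorem finite_path_prob_eq_scaled_tsum_extended_path_probs
    {V : Type} [Countable V] [Infinite V] (G : WeightedGraph V) (hconn : G.Connected)
    (Vn : ℕ → Finset V) (hVn : G.IsExhaustion Vn)
    (n : ℕ) (x y : V) (hx : x ∈ Vn n) (hy : y ∈ Vn n) (hxy : x ≠ y)
    (γ : List V) (hγ : IsPathBetween (G.restrictW (Vn n)) x y γ) :
    pathProb (G.transIn (Vn n)) γ =
      ENNReal.ofReal (G.deg x / G.degIn (Vn n) x) *
        ∑' γbar : {l : List (V ⊕ V) //
            IsPathBetween (G.extW (Vn n)) (Sum.inl x) (Sum.inl y) l ∧ projPath l = γ},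
          pathProb (G.extTrans (Vn n)) γbar.1 := by

  set A := Vn n
  have hp := G.extTrans_nonneg A
  obtain ⟨m, rfl, hc, hm⟩ := (isPathBetween_iff _ γ).1 hγ
  obtain ⟨r, hr⟩ := append_eq_firstOf y m
  have hc' := hc
  rw [hr, List.isChain_cons_cons] at hc'
  obtain ⟨-, hd⟩ := G.degIn_pos hc'.1
  have hD : 0 < G.deg x := by linarith [G.deg_eq A x, G.outDeg_nonneg A x]
  have hne : (x :: (m ++ [y])).IsChain (· ≠ ·) := by
    refine hc.imp fun a b hab h => ?_
    subst h
    simp [WeightedGraph.restrictW, G.loopless] at hab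
  have hstep : ∀ t ∈ lifts y m, pathProb (G.extTrans A) (Sum.inl x :: t) =
      ENNReal.ofReal (G.extTrans A (Sum.inl x) (Sum.inl (firstOf y m))) *
        pathProb (G.extTrans A) t := by
    intro t ht
    obtain ⟨s, rfl⟩ := lifts_head ht
    exact pathProb_cons_cons hp _ _ _
  have key : ∑' γbar : {l : List (V ⊕ V) //
        IsPathBetween (G.extW A) (Sum.inl x) (Sum.inl y) l ∧ projPath l = x :: (m ++ [y])},
          pathProb (G.extTrans A) γbar.1 =
      ∑' t : lifts y m, pathProb (G.extTrans A) (Sum.inl x :: t.1) := by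
    rw [← tsum_image (pathProb (G.extTrans A)) (List.cons_injective.injOn (s := lifts y m))]
    change ∑' γbar : ({l : List (V ⊕ V) | IsPathBetween (G.extW A) (Sum.inl x) (Sum.inl y) l ∧
      projPath l = x :: (m ++ [y])} : Set _), pathProb (G.extTrans A) γbar.1 = _
    rw [tsum_subtype, tsum_subtype]
    refine tsum_congr fun l => ?_
    -- the two index sets agree up to lists of probability zero
    by_cases hl : l ∈ (Sum.inl x :: ·) '' lifts y m
    · rw [Set.indicator_of_mem hl]
      rw [Set.indicator_apply]
      refine ite_eq_left_iff.2 fun hnot => ?_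
      by_contra h0
      refine hnot ?_
      obtain ⟨t, ht, rfl⟩ := hl
      have hcl : (Sum.inl x :: t).IsChain (fun a b => 0 < G.extW A a b) :=
        (isChain_of_pathProb_ne_zero hp _ (Ne.symm h0)).imp fun a b hab =>
          (G.extW_nonneg A a b).lt_of_ne' fun h => by
            simp [WeightedGraph.extTrans, h] at hab
      constructor
      · obtain ⟨s, rfl, hs⟩ := lifts_mem ht
        refine (isPathBetween_iff _ _).2 ⟨s, rfl, hcl, fun a ha => ?_⟩
        rcases a with a | a
        · exact ⟨fun h => (hm a (hs a ha)).1 (Sum.inl.inj h),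
            fun h => (hm a (hs a ha)).2 (Sum.inl.inj h)⟩
        · exact ⟨Sum.inr_ne_inl, Sum.inr_ne_inl⟩
      · -- prepending `x` without excursions gives a lift of `x :: (m ++ [y])`
        exact projPath_lifts (m := x :: m) hne ⟨0, t, ht, rfl⟩
    · rw [Set.indicator_of_notMem hl, Set.indicator_of_notMem]
      rintro ⟨hpath, hproj⟩
      obtain ⟨m', rfl, hcl, hm'⟩ := (isPathBetween_iff _ l).1 hpath
      -- a first step to the copy of `x` would force a return to `x`
      obtain ⟨u, s, hs⟩ : ∃ u s, m' ++ [Sum.inl y] = Sum.inl u :: s := by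
        rcases m' with _ | ⟨u | u, m'⟩
        · exact ⟨y, [], rfl⟩
        · exact ⟨u, _, rfl⟩
        · rw [List.cons_append, List.isChain_cons_cons] at hcl
          obtain ⟨h, hcl⟩ := hcl
          obtain rfl : x = u := by
            by_contra hne
            simp [WeightedGraph.extW, hne] at h
          rcases m' with _ | ⟨w | w, m'⟩
          · have := (List.isChain_cons_cons.1 hcl).1
            simp [WeightedGraph.extW, hxy.symm] at this
          · have := (List.isChain_cons_cons.1 hcl).1
            have hw : w ≠ x := fun h => (hm' (Sum.inl w) (by simp)).1 (by rw [h])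
            simp [WeightedGraph.extW, hw] at this
          · have := (List.isChain_cons_cons.1 hcl).1
            simp [WeightedGraph.extW] at this
      rw [hs, List.isChain_cons_cons] at hcl
      have hxu : x ≠ u := by
        rintro rfl
        have := hcl.1
        simp [WeightedGraph.extW, G.loopless] at this
      obtain ⟨m₁, hm₁, hmem⟩ := exists_mem_lifts G A u s hcl.2
        ⟨m', hs.symm, fun h => (hm' _ h).2 rfl⟩
      rw [hs, projPath_cons_cons_of_ne hxu, hm₁] at hproj
      obtain rfl : m₁ = m := by simpa using hproj
      exact hl ⟨_, hmem, by rw [hs]⟩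
  rw [key, tsum_congr fun t : lifts y m => hstep t.1 t.2, ENNReal.tsum_mul_left,
    tsum_pathProb_lifts G A y m (hr ▸ hc'.2), ← mul_assoc, hr,
    pathProb_cons_cons (G.transIn_nonneg A),
    ← ENNReal.ofReal_mul (div_pos hD hd).le, G.extTrans_inl_inl _ hx, WeightedGraph.transIn]
  congr 2
  field_simp
end

section
/- For the weighted graph 𝒯, the free effective resistance between B and T equals 2: R^F(B,T) = 2. -/
/-!
By the symmetry exchanging `B` and `T`, the walk on `Gₙ` started at `B` is equally likely to enter
`{B, T}` at a given positive time through `T` as through `B`: every entrance after the first step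
comes from a vertex `j` of the ray, and `p(j, B) = p(j, T)` (`entry_symm`). Since `Gₙ` is finite
and connected, the walk enters `{B, T}` at a positive time almost surely. Hence
`Pⁿ_B[τ_T < τ_B⁺] = 1/2` for every `n` (`prob_eq_half`), and as `(cₙ)_B = 1`, each
`R_{Gₙ}(B, T)` equals `2`, so the limit is that of a constant sequence.

Almost sure return is obtained from a Lyapunov function: `g(k) = 2 - 4^{-k}` on the ray (and `0`
at `B`, `T`) satisfies `p g ≤ (1 - 4^{-n}/4) g` on `{0, …, n}` (`drift`), because a step from
`k ≥ 1` goes towards `0` with probability at least `1/3`. So the probability of staying on the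
ray for `m` further steps decays geometrically.

The law of the walk is known only through its cylinder probabilities; `markov_step` extracts the
one-step Markov property from them, and everything else is a recursion for the entrance
probabilities `μ (rayThen m y)`.
-/

open MeasureTheory Filter Topology Classical
open scoped ENNReal

/-- the edge weights along the ray of the graph `𝒯`: `c(0,1) = 1`, `c(k,k+1) = 2^(k-1)` -/
def lineW : ℕ → ℝ := fun k => if k = 0 then 1 else 2 ^ (k - 1)

/-- the weights of the graph `𝒯` on the vertex set `{B, T} ∪ ℕ₀`, realized as
`Bool ⊕ ℕ` with `B = Sum.inl true` and `T = Sum.inl false`: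
`c(B,0) = c(T,0) = c(0,1) = 1` and `c(k, k+1) = 2^(k-1)` for `k ≥ 1`. -/
def cT : Bool ⊕ ℕ → Bool ⊕ ℕ → ℝ
  | Sum.inl _, Sum.inl _ => 0
  | Sum.inl _, Sum.inr k => if k = 0 then 1 else 0
  | Sum.inr k, Sum.inl _ => if k = 0 then 1 else 0
  | Sum.inr j, Sum.inr k => if k = j + 1 then lineW j else if j = k + 1 then lineW k else 0

/-- the vertex `B` of `𝒯` -/
def vB : Bool ⊕ ℕ := Sum.inl true

/-- the vertex `T` of `𝒯` -/
def vT : Bool ⊕ ℕ := Sum.inl false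

/-- the exhaustion `Vₙ = {B, T, 0, 1, …, n}` of `𝒯` -/
def VTn (n : ℕ) : Finset (Bool ⊕ ℕ) :=
  insert vB (insert vT ((Finset.range (n + 1)).image Sum.inr))

/-! ### The one-step Markov property -/

attribute [local instance] trajMS

lemma measurable_coord {S : Type} (k : ℕ) (s : Set S) :
    MeasurableSet {ω : ℕ → S | ω k ∈ s} :=
  (@measurable_pi_apply ℕ (fun _ => S) (fun _ => ⊤) k) (show MeasurableSet[⊤] s from trivial)

/-- The one-step Markov property: an event determined by the coordinates up to time `k`, on which
the walk is at `a` at time `k`, is followed by a step to `y` with probability `p a y`. -/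
lemma markov_step {S : Type} [Countable S] {p : S → S → ℝ} {x : S} {μ : TrajMeasure S}
    (h : IsRandomWalk p x μ) (k : ℕ) (D : Set (ℕ → S)) (a y : S)
    (hD : ∀ ω ω' : ℕ → S, (∀ i ≤ k, ω i = ω' i) → ω ∈ D → ω' ∈ D)
    (ha : ∀ ω ∈ D, ω k = a) :
    μ (D ∩ {ω | ω (k + 1) = y}) = μ D * ENNReal.ofReal (p a y) := by
  set r : (ℕ → S) → (Fin (k + 1) → S) := fun ω i => ω i with hr
  have hDr : r ⁻¹' (r '' D) = D := by
    apply Set.Subset.antisymm _ (Set.subset_preimage_image _ _)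
    rintro ω ⟨ω', hω', he⟩
    exact hD ω' ω (fun i hi => congrFun he ⟨i, by omega⟩) hω'
  have hmeas : ∀ u ∈ r '' D, MeasurableSet (r ⁻¹' {u}) := by
    intro u _
    have : r ⁻¹' {u} = ⋂ i : Fin (k + 1), {ω | ω i ∈ ({u i} : Set S)} := by
      ext ω; simp [hr, funext_iff]
    rw [this]
    exact MeasurableSet.iInter fun i => measurable_coord _ _
  have hc : (r '' D).Countable := Set.to_countable _
  have hy : MeasurableSet {ω : ℕ → S | ω (k + 1) = y} := measurable_coord (k + 1) {y}
  have key : ∀ u : r '' D, (μ.restrict {ω | ω (k + 1) = y}) (r ⁻¹' {u.1})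
      = μ (r ⁻¹' {u.1}) * ENNReal.ofReal (p a y) := by
    rintro ⟨u, ω, hω, rfl⟩
    rw [Measure.restrict_apply' hy]
    -- the prefix `ω 0, …, ω k`, prolonged by `y`
    set f : ℕ → S := fun j => if j ≤ k then ω j else y with hf
    have e1 : r ⁻¹' {r ω} = {ω' | ∀ j ≤ k, ω' j = f j} := by
      ext ω'
      simp only [Set.mem_preimage, Set.mem_singleton_iff, Set.mem_ofPred_eq, hr, funext_iff, hf]
      constructor
      · intro H j hj
        rw [if_pos hj]; exact H ⟨j, by omega⟩
      · intro H i
        have := H i (by omega)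
        rwa [if_pos (by omega)] at this
    have e2 : r ⁻¹' {r ω} ∩ {ω' | ω' (k + 1) = y} = {ω' | ∀ j ≤ k + 1, ω' j = f j} := by
      rw [e1]
      ext ω'
      simp only [Set.mem_inter_iff, Set.mem_ofPred_eq]
      constructor
      · rintro ⟨H1, H2⟩ j hj
        rcases Nat.lt_or_ge k j with hj' | hj'
        · obtain rfl : j = k + 1 := by omega
          simp [hf, H2]
        · exact H1 j hj'
      · intro H
        refine ⟨fun j hj => H j (by omega), ?_⟩
        rw [H _ le_rfl]; simp [hf]
    rw [e2, e1, h.2, h.2, Finset.prod_range_succ, ← mul_assoc]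
    have e3 : f k = a := by simp [hf, ha ω hω]
    have e4 : f (k + 1) = y := by simp [hf]
    rw [e3, e4]
  calc μ (D ∩ {ω | ω (k + 1) = y})
      = (μ.restrict {ω | ω (k + 1) = y}) (r ⁻¹' (r '' D)) := by
        rw [hDr, Measure.restrict_apply' hy]
    _ = ∑' u : r '' D, (μ.restrict {ω | ω (k + 1) = y}) (r ⁻¹' {u.1}) :=
        (tsum_measure_preimage_singleton hc hmeas).symm
    _ = ∑' u : r '' D, μ (r ⁻¹' {u.1}) * ENNReal.ofReal (p a y) := tsum_congr key
    _ = μ D * ENNReal.ofReal (p a y) := by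
        rw [ENNReal.tsum_mul_right, tsum_measure_preimage_singleton hc hmeas, hDr]

/-! ### First entrance into `{B, T}` -/

/-- The event that the walk is on the ray `ℕ₀` at the times `1, …, m` and at `y` at time `m + 1`.
For `y ∈ {B, T}` it says that the first positive time in `{B, T}` is `m + 1`, at `y`. -/
def rayThen (m : ℕ) (y : Bool ⊕ ℕ) : Set (ℕ → Bool ⊕ ℕ) :=
  {ω | (∀ j < m, ∃ i, ω (j + 1) = Sum.inr i) ∧ ω (m + 1) = y}

lemma measurableSet_rayThen (m : ℕ) (y : Bool ⊕ ℕ) : MeasurableSet (rayThen m y) := by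
  have : rayThen m y = (⋂ j : Fin m, {ω | ω (j + 1) ∈ Set.range Sum.inr}) ∩
      {ω | ω (m + 1) ∈ ({y} : Set (Bool ⊕ ℕ))} := by
    ext ω
    simp [rayThen, Fin.forall_iff, eq_comm]
  rw [this]
  exact (MeasurableSet.iInter fun j => measurable_coord _ _).inter (measurable_coord _ _)

lemma rayThen_disjoint {m m' : ℕ} {y y' : Bool ⊕ ℕ} (h : m ≠ m' ∨ y ≠ y')
    (hy : m < m' → ∃ b, y = Sum.inl b) (hy' : m' < m → ∃ b, y' = Sum.inl b) :
    Disjoint (rayThen m y) (rayThen m' y') := by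
  rw [Set.disjoint_left]
  rintro ω ⟨h1, h2⟩ ⟨h3, h4⟩
  rcases lt_trichotomy m m' with hlt | rfl | hlt
  · obtain ⟨b, rfl⟩ := hy hlt
    obtain ⟨i, hi⟩ := h3 m hlt
    simp [h2] at hi
  · rcases h with h | h
    · exact h rfl
    · exact h (h2.symm.trans h4)
  · obtain ⟨b, rfl⟩ := hy' hlt
    obtain ⟨i, hi⟩ := h1 m' hlt
    simp [h4] at hi

section Walk

variable {p : Bool ⊕ ℕ → Bool ⊕ ℕ → ℝ} {μ : TrajMeasure (Bool ⊕ ℕ)}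

lemma start_ae (h : IsRandomWalk p vB μ) : ∀ᵐ ω ∂μ, ω 0 = vB := by
  have : IsProbabilityMeasure μ := ⟨h.1⟩
  have h0 := h.2 0 (fun _ => vB)
  simp only [Nat.le_zero, forall_eq, if_true, Finset.range_zero, Finset.prod_empty,
    mul_one] at h0
  rw [ae_iff]
  exact (prob_compl_eq_zero_iff (measurable_coord 0 {vB})).2 h0

lemma rayThen_zero (h : IsRandomWalk p vB μ) (y : Bool ⊕ ℕ) :
    μ (rayThen 0 y) = ENNReal.ofReal (p vB y) := by
  have : IsProbabilityMeasure μ := ⟨h.1⟩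
  have h1 := markov_step h 0 {ω | ω 0 = vB} vB y (fun ω ω' he hω => by
    rw [Set.mem_ofPred_eq, ← he 0 le_rfl]; exact hω) (fun _ hω => hω)
  have h2 : μ {ω | ω 0 = vB} = 1 :=
    (prob_compl_eq_zero_iff (measurable_coord 0 {vB})).1 (start_ae h)
  rw [h2, one_mul] at h1
  rw [← h1]
  apply measure_congr
  filter_upwards [start_ae h] with ω hω
  apply propext
  change ω ∈ rayThen 0 y ↔ ω ∈ {ω | ω 0 = vB} ∩ {ω | ω (0 + 1) = y}
  simp [rayThen, hω]

lemma rayThen_succ (h : IsRandomWalk p vB μ) (m : ℕ) (y : Bool ⊕ ℕ) :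
    μ (rayThen (m + 1) y)
      = ∑' j : ℕ, μ (rayThen m (Sum.inr j)) * ENNReal.ofReal (p (Sum.inr j) y) := by
  have e : rayThen (m + 1) y
      = ⋃ j : ℕ, (rayThen m (Sum.inr j) ∩ {ω | ω (m + 1 + 1) = y}) := by
    ext ω
    simp only [rayThen, Set.mem_ofPred_eq, Set.mem_iUnion, Set.mem_inter_iff]
    constructor
    · rintro ⟨h1, h2⟩
      obtain ⟨i, hi⟩ := h1 m (by omega)
      exact ⟨i, ⟨fun j hj => h1 j (by omega), hi⟩, h2⟩
    · rintro ⟨i, ⟨h1, hi⟩, h2⟩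
      refine ⟨fun j hj => ?_, h2⟩
      rcases Nat.lt_or_ge j m with hj' | hj'
      · exact h1 j hj'
      · obtain rfl : j = m := by omega
        exact ⟨i, hi⟩
  rw [e, measure_iUnion]
  · refine tsum_congr fun j => markov_step h (m + 1) _ _ _ ?_ ?_
    · rintro ω ω' he ⟨h1, h2⟩
      exact ⟨fun j hj => by rw [← he _ (by omega)]; exact h1 j hj,
        by rw [← he _ le_rfl]; exact h2⟩
    · exact fun ω hω => hω.2
  · intro i j hij
    exact (rayThen_disjoint (Or.inr (by simpa using hij)) (by simp) (by simp)).mono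
      Set.inter_subset_left Set.inter_subset_left
  · exact fun j => (measurableSet_rayThen _ _).inter (measurable_coord _ {y})

/-- First entrances at `B` and at `T` are equally likely, given the reflection symmetry of `p`. -/
lemma entry_symm (h : IsRandomWalk p vB μ) (h0 : p vB vB = p vB vT)
    (hs : ∀ j, p (Sum.inr j) vB = p (Sum.inr j) vT) (m : ℕ) :
    μ (rayThen m vB) = μ (rayThen m vT) := by
  cases m with
  | zero => rw [rayThen_zero h, rayThen_zero h, h0]
  | succ m => rw [rayThen_succ h, rayThen_succ h]; simp_rw [hs]

/-- If some function `g` with `1 ≤ g ≤ 2` on the ray is contracted by the walk killed off the ray,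
then almost surely the walk leaves the ray. -/
lemma ray_null (h : IsRandomWalk p vB μ) (g : ℕ → ℝ≥0∞) (l : ℝ≥0∞) (hl : l < 1)
    (hg1 : ∀ j, 1 ≤ g j) (hg2 : ∀ j, g j ≤ 2)
    (hd : ∀ j, ∑' i, ENNReal.ofReal (p (Sum.inr j) (Sum.inr i)) * g i ≤ l * g j) :
    μ {ω | ∀ m, ∃ i, ω (m + 1) = Sum.inr i} = 0 := by
  have hprob : IsProbabilityMeasure μ := ⟨h.1⟩
  have hunion : ∀ m, μ (⋃ j, rayThen m (Sum.inr j)) = ∑' j, μ (rayThen m (Sum.inr j)) := by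
    intro m
    refine measure_iUnion (fun i j hij => rayThen_disjoint (Or.inr (by simpa using hij))
      (by simp) (by simp)) (fun j => measurableSet_rayThen _ _)
  have hG : ∀ m, ∑' j, μ (rayThen m (Sum.inr j)) * g j ≤ l ^ m * 2 := by
    intro m
    induction m with
    | zero =>
      calc ∑' j, μ (rayThen 0 (Sum.inr j)) * g j
          ≤ ∑' j, μ (rayThen 0 (Sum.inr j)) * 2 :=
            ENNReal.tsum_le_tsum fun j => mul_le_mul_right (hg2 j) _
        _ = μ (⋃ j, rayThen 0 (Sum.inr j)) * 2 := by rw [ENNReal.tsum_mul_right, hunion]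
        _ ≤ 1 * 2 := mul_le_mul_left prob_le_one _
        _ = l ^ 0 * 2 := by simp
    | succ m ih =>
      calc ∑' i, μ (rayThen (m + 1) (Sum.inr i)) * g i
          = ∑' i, ∑' j, μ (rayThen m (Sum.inr j)) *
              (ENNReal.ofReal (p (Sum.inr j) (Sum.inr i)) * g i) := by
            refine tsum_congr fun i => ?_
            rw [rayThen_succ h, ← ENNReal.tsum_mul_right]
            simp_rw [mul_assoc]
        _ = ∑' j, μ (rayThen m (Sum.inr j)) *
              ∑' i, ENNReal.ofReal (p (Sum.inr j) (Sum.inr i)) * g i := by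
            rw [ENNReal.tsum_comm]
            simp_rw [ENNReal.tsum_mul_left]
        _ ≤ ∑' j, μ (rayThen m (Sum.inr j)) * (l * g j) :=
            ENNReal.tsum_le_tsum fun j => mul_le_mul_right (hd j) _
        _ = l * ∑' j, μ (rayThen m (Sum.inr j)) * g j := by
            rw [← ENNReal.tsum_mul_left]
            exact tsum_congr fun j => by ring
        _ ≤ l * (l ^ m * 2) := mul_le_mul_right ih _
        _ = l ^ (m + 1) * 2 := by ring
  have hbound : ∀ m, μ {ω | ∀ m, ∃ i, ω (m + 1) = Sum.inr i} ≤ l ^ m * 2 := by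
    intro m
    calc μ {ω | ∀ m, ∃ i, ω (m + 1) = Sum.inr i}
        ≤ μ (⋃ j, rayThen m (Sum.inr j)) := by
          refine measure_mono fun ω hω => ?_
          obtain ⟨i, hi⟩ := hω m
          exact Set.mem_iUnion.2 ⟨i, fun j _ => hω j, hi⟩
      _ = ∑' j, μ (rayThen m (Sum.inr j)) := hunion m
      _ ≤ ∑' j, μ (rayThen m (Sum.inr j)) * g j :=
          ENNReal.tsum_le_tsum fun j => le_mul_of_one_le_right' (hg1 j)
      _ ≤ _ := hG m
  have hlim : Tendsto (fun m : ℕ => l ^ m * 2) atTop (𝓝 0) := by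
    simpa using ENNReal.Tendsto.mul_const (b := (2 : ℝ≥0∞))
      (ENNReal.tendsto_pow_atTop_nhds_zero_of_lt_one hl) (Or.inr (by simp))
  exact le_antisymm (ge_of_tendsto' hlim hbound) bot_le

lemma hit_iff {ω : ℕ → Bool ⊕ ℕ} (h0 : ω 0 = vB) :
    hitTime {vT} ω < hitTime1 {vB} ω ↔ ∃ m, ω ∈ rayThen m vT := by
  constructor
  · intro hlt
    have hex : ∃ k, ω k = vT := by
      by_contra! hne
      have : hitTime {vT} ω = ⊤ := by
        simp [hitTime, hne]
      rw [this] at hlt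
      exact not_top_lt hlt
    have hle : ∀ k, 1 ≤ k → ω k = vB → Nat.find hex < k := by
      intro k hk1 hk
      have h1 : hitTime1 {vB} ω ≤ k := sInf_le ⟨k, hk1, rfl, hk⟩
      have h2 : (Nat.find hex : ℕ∞) ≤ hitTime {vT} ω := by
        refine le_sInf ?_
        rintro _ ⟨j, rfl, hj⟩
        exact_mod_cast Nat.find_min' hex hj
      exact_mod_cast (h2.trans_lt hlt).trans_le h1
    have hpos : Nat.find hex ≠ 0 := by
      intro hz
      have := Nat.find_spec hex
      rw [hz, h0] at this
      simp [vB, vT] at this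
    obtain ⟨m, hm⟩ := Nat.exists_eq_succ_of_ne_zero hpos
    refine ⟨m, fun j hj => ?_, ?_⟩
    · rcases hj' : ω (j + 1) with b | i
      · cases b with
        | true => have := hle (j + 1) (by omega) hj'; omega
        | false => have := Nat.find_min' hex hj'; omega
      · exact ⟨i, rfl⟩
    · have := Nat.find_spec hex
      rwa [hm] at this
  · rintro ⟨m, h1, h2⟩
    have ha : hitTime {vT} ω ≤ ((m + 1 : ℕ) : ℕ∞) := sInf_le ⟨m + 1, rfl, h2⟩
    have hb : ((m + 2 : ℕ) : ℕ∞) ≤ hitTime1 {vB} ω := by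
      refine le_sInf ?_
      rintro _ ⟨k, hk, rfl, hkB⟩
      have hkB' : ω k = vB := hkB
      by_contra hlt
      have hlt' : k < m + 2 := by exact_mod_cast not_le.1 hlt
      rcases Nat.lt_or_ge k (m + 1) with hk' | hk'
      · obtain ⟨i, hi⟩ := h1 (k - 1) (by omega)
        rw [Nat.sub_add_cancel hk, hkB'] at hi
        simp [vB] at hi
      · obtain rfl : k = m + 1 := by omega
        rw [h2] at hkB'
        simp [vB, vT] at hkB'
    exact ha.trans_lt (lt_of_lt_of_le (by exact_mod_cast Nat.lt_succ_self _) hb)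

lemma prob_eq_half (h : IsRandomWalk p vB μ) (h0 : p vB vB = p vB vT)
    (hs : ∀ j, p (Sum.inr j) vB = p (Sum.inr j) vT)
    (hnull : μ {ω | ∀ m, ∃ i, ω (m + 1) = Sum.inr i} = 0) :
    μ {ω | hitTime {vT} ω < hitTime1 {vB} ω} = 2⁻¹ := by
  have hprob : IsProbabilityMeasure μ := ⟨h.1⟩
  have hU : ∀ b, μ (⋃ m, rayThen m (Sum.inl b)) = ∑' m, μ (rayThen m (Sum.inl b)) := fun b =>
    measure_iUnion (fun m m' hm => rayThen_disjoint (Or.inl hm) (fun _ => ⟨b, rfl⟩)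
      (fun _ => ⟨b, rfl⟩)) (fun m => measurableSet_rayThen _ _)
  have hE : μ {ω | hitTime {vT} ω < hitTime1 {vB} ω} = μ (⋃ m, rayThen m vT) := by
    apply measure_congr
    filter_upwards [start_ae h] with ω hω
    apply propext
    change ω ∈ {ω | hitTime {vT} ω < hitTime1 {vB} ω} ↔ ω ∈ ⋃ m, rayThen m vT
    rw [Set.mem_iUnion]
    exact hit_iff hω
  have hsymm : μ (⋃ m, rayThen m vB) = μ (⋃ m, rayThen m vT) := by
    rw [vB, vT, hU, hU]
    exact tsum_congr (entry_symm h h0 hs)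
  have hdisj : Disjoint (⋃ m, rayThen m vB) (⋃ m, rayThen m vT) := by
    simp only [Set.disjoint_iUnion_left, Set.disjoint_iUnion_right]
    exact fun m m' => rayThen_disjoint (Or.inr (by simp [vB, vT])) (fun _ => ⟨_, rfl⟩)
      (fun _ => ⟨_, rfl⟩)
  have hcover : {ω : ℕ → Bool ⊕ ℕ | ∀ m, ∃ i, ω (m + 1) = Sum.inr i}ᶜ
      ⊆ (⋃ m, rayThen m vB) ∪ ⋃ m, rayThen m vT := by
    intro ω hω
    have hex : ∃ m, ∀ i, ω (m + 1) ≠ Sum.inr i := by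
      simpa using hω
    have hray : ∀ j < Nat.find hex, ∃ i, ω (j + 1) = Sum.inr i := fun j hj => by
      simpa using Nat.find_min hex hj
    rcases hb : ω (Nat.find hex + 1) with b | i
    · cases b with
      | true => exact Or.inl (Set.mem_iUnion.2 ⟨_, hray, hb⟩)
      | false => exact Or.inr (Set.mem_iUnion.2 ⟨_, hray, hb⟩)
    · exact absurd hb (Nat.find_spec hex i)
  have htotal : μ ((⋃ m, rayThen m vB) ∪ ⋃ m, rayThen m vT) = 1 := by
    have : ∀ᵐ ω ∂μ, ω ∈ (⋃ m, rayThen m vB) ∪ ⋃ m, rayThen m vT := by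
      rw [ae_iff]
      refine measure_mono_null ?_ hnull
      intro ω hω
      by_contra hc
      exact hω (hcover hc)
    exact (prob_compl_eq_zero_iff ((MeasurableSet.iUnion fun m => measurableSet_rayThen _ _).union
      (MeasurableSet.iUnion fun m => measurableSet_rayThen _ _))).1 this
  rw [measure_union hdisj (MeasurableSet.iUnion fun m => measurableSet_rayThen _ _), hsymm,
    ← two_mul] at htotal
  rw [hE]
  exact ENNReal.eq_inv_of_mul_eq_one_left (by rwa [mul_comm])

end Walk

/-! ### Weights of `Gₙ` and the drift inequality -/

lemma sum_VTn (n : ℕ) (f : Bool ⊕ ℕ → ℝ) :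
    ∑ y ∈ VTn n, f y = f vB + (f vT + ∑ i ∈ Finset.range (n + 1), f (Sum.inr i)) := by
  unfold VTn
  rw [Finset.sum_insert (by simp [vB, vT]), Finset.sum_insert (by simp [vT]),
    Finset.sum_image (by simp)]

lemma inr_mem_VTn (n j : ℕ) : (Sum.inr j : Bool ⊕ ℕ) ∈ VTn n ↔ j ≤ n := by
  simp [VTn, vB, vT]

lemma sum_ray_zero (n : ℕ) (f : ℕ → ℝ) :
    ∑ i ∈ Finset.range (n + 1), cT (Sum.inr 0) (Sum.inr i) * f i
      = if 1 ≤ n then f 1 else 0 := by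
  have : ∀ i, cT (Sum.inr 0) (Sum.inr i) * f i = if i = 1 then f 1 else 0 := by
    intro i
    by_cases hi : i = 1 <;> simp [cT, hi, lineW]
  simp_rw [this]
  simp [Nat.one_le_iff_ne_zero, Nat.pos_iff_ne_zero]

lemma sum_ray_succ {n j : ℕ} (hj : j + 1 ≤ n) (f : ℕ → ℝ) :
    ∑ i ∈ Finset.range (n + 1), cT (Sum.inr (j + 1)) (Sum.inr i) * f i
      = lineW j * f j + (if j + 2 ≤ n then lineW (j + 1) else 0) * f (j + 2) := by
  have : ∀ i, cT (Sum.inr (j + 1)) (Sum.inr i) * f i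
      = (if i = j then lineW j * f j else 0)
        + (if i = j + 2 then lineW (j + 1) * f (j + 2) else 0) := by
    intro i
    by_cases h1 : i = j
    · subst h1
      have h2 : ¬ i = i + 1 + 1 := by omega
      simp [cT, h2]
    · by_cases h2 : i = j + 2
      · subst h2; simp [cT]
      · have h3 : ¬ j = i := fun h => h1 h.symm
        simp [cT, h1, h2, h3]
  simp_rw [this]
  rw [Finset.sum_add_distrib, Finset.sum_ite_eq', Finset.sum_ite_eq',
    if_pos (Finset.mem_range.2 (by omega))]
  by_cases h : j + 2 ≤ n
  · rw [if_pos (Finset.mem_range.2 (by omega)), if_pos h]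
  · rw [if_neg (by rw [Finset.mem_range]; omega), if_neg h, zero_mul]

lemma lineW_pos (k : ℕ) : 0 < lineW k := by
  unfold lineW; split_ifs <;> positivity

/-- Steps away from `0` are at most twice as likely as steps towards `0`. -/
lemma lineW_succ_le (k : ℕ) : lineW (k + 1) ≤ 2 * lineW k := by
  rcases k with _ | k
  · norm_num [lineW]
  · simp [lineW, pow_succ, mul_comm]

/-- The Lyapunov function `g(k) = 2 - 4^{-k}` on the ray. -/
noncomputable def lyap (k : ℕ) : ℝ := 2 - (1 / 4) ^ k

lemma one_le_lyap (k : ℕ) : 1 ≤ lyap k := by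
  have : ((1 : ℝ) / 4) ^ k ≤ 1 := pow_le_one₀ (by norm_num) (by norm_num)
  unfold lyap; linarith

lemma lyap_le_two (k : ℕ) : lyap k ≤ 2 := by
  have : (0 : ℝ) ≤ (1 / 4) ^ k := by positivity
  unfold lyap; linarith

lemma degIn_ray {G : WeightedGraph (Bool ⊕ ℕ)} (hG : G.c = cT) (n j : ℕ) :
    G.degIn (VTn n) (Sum.inr j)
      = (if j = 0 then 2 else 0)
        + ∑ i ∈ Finset.range (n + 1), cT (Sum.inr j) (Sum.inr i) * 1 := by
  unfold WeightedGraph.degIn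
  rw [sum_VTn, hG]
  by_cases hj : j = 0
  · simp [cT, vB, vT, hj]; ring
  · simp [cT, vB, vT, hj]

/-- The drift inequality, before division by the degree, which is positive. -/
lemma drift_aux {G : WeightedGraph (Bool ⊕ ℕ)} (hG : G.c = cT) {n j : ℕ} (hj : j ≤ n) :
    0 < G.degIn (VTn n) (Sum.inr j) ∧
    ∑ i ∈ Finset.range (n + 1), cT (Sum.inr j) (Sum.inr i) * lyap i
      ≤ (1 - (1 / 4) ^ n / 4) * lyap j * G.degIn (VTn n) (Sum.inr j) := by
  rw [degIn_ray hG]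
  rcases j with _ | j
  · rw [sum_ray_zero, sum_ray_zero, if_pos (rfl : (0 : ℕ) = 0)]
    have : ((1 : ℝ) / 4) ^ n ≤ 1 := pow_le_one₀ (by norm_num) (by norm_num)
    split_ifs
    · refine ⟨by norm_num, ?_⟩
      norm_num [lyap]; norm_num at this; linarith
    · refine ⟨by norm_num, ?_⟩
      norm_num [lyap]; norm_num at this; linarith
  · rw [sum_ray_succ hj, sum_ray_succ hj]
    have hw := lineW_pos j
    obtain ⟨r, hr, hr0, hr2⟩ : ∃ r, (if j + 2 ≤ n then lineW (j + 1) else 0) = r ∧ 0 ≤ r ∧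
        r ≤ 2 * lineW j := by
      refine ⟨_, rfl, ?_, ?_⟩ <;> split_ifs
      · exact (lineW_pos _).le
      · exact le_rfl
      · exact lineW_succ_le j
      · linarith
    rw [hr, if_neg (Nat.succ_ne_zero j)]
    refine ⟨by linarith, ?_⟩
    have hd : ((1 : ℝ) / 4) ^ n ≤ (1 / 4) ^ (j + 1) :=
      pow_le_pow_of_le_one (by norm_num) (by norm_num) hj
    have hd0 : (0 : ℝ) < (1 / 4) ^ n := by positivity
    have ha0 : (0 : ℝ) < (1 / 4) ^ (j + 1) := by positivity
    have e1 : lyap j = 2 - 4 * (1 / 4) ^ (j + 1) := by unfold lyap; ring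
    have e2 : lyap (j + 2) = 2 - (1 / 4) ^ (j + 1) / 4 := by unfold lyap; ring
    have e3 : lyap (j + 1) = 2 - (1 / 4) ^ (j + 1) := rfl
    rw [e1, e2, e3]
    set a : ℝ := (1 / 4) ^ (j + 1)
    set d : ℝ := (1 / 4) ^ n
    set w := lineW j
    have h1 : 0 ≤ a * (2 * w - r) := mul_nonneg ha0.le (by linarith)
    have h2 : 0 ≤ (a - d) * (w + r) := mul_nonneg (by linarith) (by linarith)
    have h3 : 0 ≤ d * a * (w + r) := by positivity
    nlinarith

/-- On the ray, the walk on `Gₙ` killed at `B` and `T` contracts `lyap`. -/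
lemma drift {G : WeightedGraph (Bool ⊕ ℕ)} (hG : G.c = cT) (n j : ℕ) :
    ∑' i, ENNReal.ofReal (G.transIn (VTn n) (Sum.inr j) (Sum.inr i)) * ENNReal.ofReal (lyap i)
      ≤ ENNReal.ofReal (1 - (1 / 4) ^ n / 4) * ENNReal.ofReal (lyap j) := by
  have hpow : ((1 : ℝ) / 4) ^ n ≤ 1 := pow_le_one₀ (by norm_num) (by norm_num)
  rcases Nat.lt_or_ge n j with hj | hj
  · have : ∀ i, G.transIn (VTn n) (Sum.inr j) (Sum.inr i) = 0 := by
      intro i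
      simp [WeightedGraph.transIn, WeightedGraph.restrictW, inr_mem_VTn, hj.not_ge]
    simp [this]
  · obtain ⟨hpos, hle⟩ := drift_aux hG hj
    have hg : ∀ i, 0 ≤ lyap i := fun i => zero_le_one.trans (one_le_lyap i)
    have hc : ∀ i, 0 ≤ cT (Sum.inr j) (Sum.inr i) := fun i => hG ▸ G.nonneg _ _
    rw [tsum_eq_sum (s := Finset.range (n + 1))]
    · have : ∀ i ∈ Finset.range (n + 1),
          ENNReal.ofReal (G.transIn (VTn n) (Sum.inr j) (Sum.inr i)) * ENNReal.ofReal (lyap i)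
          = ENNReal.ofReal (cT (Sum.inr j) (Sum.inr i) * lyap i
              / G.degIn (VTn n) (Sum.inr j)) := by
        intro i hi
        have hi' : i ≤ n := Nat.lt_succ_iff.1 (Finset.mem_range.1 hi)
        rw [← ENNReal.ofReal_mul' (hg i)]
        congr 1
        rw [WeightedGraph.transIn, WeightedGraph.restrictW,
          if_pos ⟨(inr_mem_VTn n j).2 hj, (inr_mem_VTn n i).2 hi'⟩, hG]
        ring
      rw [Finset.sum_congr rfl this, ← ENNReal.ofReal_sum_of_nonneg
        (fun i _ => div_nonneg (mul_nonneg (hc i) (hg i)) hpos.le), ← Finset.sum_div,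
        ← ENNReal.ofReal_mul' (hg j)]
      exact ENNReal.ofReal_le_ofReal ((div_le_iff₀ hpos).2 hle)
    · intro i hi
      have hi' : ¬ i ≤ n := by simpa [Nat.lt_succ_iff] using hi
      simp [WeightedGraph.transIn, WeightedGraph.restrictW, inr_mem_VTn, hi']

/-! ### The effective resistance -/

/-- For the graph `𝒯`, the free effective resistance between `B`
and `T` equals `2`, i.e. `R_{Gₙ}(B,T) = 1/((cₙ)_B · Pⁿ_B[τ_T < τ_B⁺]) → 2` along the
exhaustion `Vₙ = {B, T, 0, …, n}`. -/
theorem graphT_free_resistance_eq_two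
    (G : WeightedGraph (Bool ⊕ ℕ)) (hG : G.c = cT)
    (Pn : ℕ → TrajMeasure (Bool ⊕ ℕ))
    (hPn : ∀ n : ℕ, IsRandomWalk (G.transIn (VTn n)) vB (Pn n)) :
    Filter.Tendsto
      (fun n : ℕ => 1 / (ENNReal.ofReal (G.degIn (VTn n) vB) *
          Pn n {ω | hitTime {vT} ω < hitTime1 {vB} ω}))
      Filter.atTop (nhds 2) := by
  refine tendsto_const_nhds.congr fun n => ?_
  have hdeg : G.degIn (VTn n) vB = 1 := by
    unfold WeightedGraph.degIn
    rw [sum_VTn, hG]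
    simp [cT, vB, vT]
  have hnull := ray_null (hPn n) (fun j => ENNReal.ofReal (lyap j))
    (ENNReal.ofReal (1 - (1 / 4) ^ n / 4))
    (by
      have : (0 : ℝ) < (1 / 4) ^ n := by positivity
      rw [← ENNReal.ofReal_one]
      exact (ENNReal.ofReal_lt_ofReal_iff one_pos).2 (by linarith))
    (fun j => by simpa using one_le_lyap j)
    (fun j => by simpa using ENNReal.ofReal_le_ofReal (lyap_le_two j))
    (drift hG n)
  have hB : vB ∈ VTn n := by simp [VTn]
  have hT : vT ∈ VTn n := by simp [VTn]
  have hhalf := prob_eq_half (hPn n)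
    (by simp [WeightedGraph.transIn, WeightedGraph.restrictW, hG, cT, vB, vT])
    (fun j => by
      simp only [WeightedGraph.transIn, WeightedGraph.restrictW, hB, hT, hG]
      rfl)
    hnull
  rw [hdeg, hhalf]
  simp
end

section
/- For the random walk on the weighted graph 𝒯 started at the vertex 0, one has P_0[τ_B < τ_T] = P_0[τ_T < τ_B] = (1 − P_0[τ_B = τ_T = ∞])/2 < 1/2, and consequently P_B[τ_T < τ_B⁺] = P_0[τ_T < τ_B] < 1/2 and P_B[τ_T ≤ τ_B⁺] = P_0[τ_T ≤ τ_B] = (1 + P_0[τ_B = τ_T = ∞])/2 > 1/2. -/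
/-!
Exchanging `B` and `T` is an automorphism of the weighted graph `𝒯` that fixes `0`, and the law
of the walk is determined by its cylinder probabilities (`IsRandomWalk.unique`). Hence the law
`P_0` is invariant under the exchange (`map_swapBT`), so `τ_B < τ_T` and `τ_T < τ_B` have the same
probability. Finite hitting times of `B` and `T` never coincide, so these two events together with
`τ_B = τ_T = ∞` partition the path space; this gives both formulas in terms of the escape
probability. From `B` the walk has to step to `0`, so shifting a `P_B`-path by one time unit gives
a `P_0`-path (`map_shift`), under which `τ_T` and `τ_B⁺` both decrease by one; this reduces the
statements on `P_B` to those on `P_0`.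

The strict inequalities require `P_0[τ_B = τ_T = ∞] > 0`. The function `hT`, given by `0` on
`{B, T}`, `1/7` at `0` and `1 - (4/7) 2^(-k)` at `k + 1`, is bounded by `1` and harmonic on `ℕ₀`.
By induction on the length of the time window, the walk conditioned on a finite initial segment
ending in `x` avoids `B` and `T` during the window with probability at least `hT x`
(`escape_window`), so the escape probability from `0` is at least `1/7` (`escape_pos`).
-/

open MeasureTheory Filter Topology Classical
open scoped ENNReal

/-! ### Trajectory measures -/

/-- The cylinder of all trajectories that agree with `f` up to time `n`. -/
def cyl {S : Type} (n : ℕ) (f : ℕ → S) : Set (ℕ → S) := {ω | ∀ k ≤ n, ω k = f k}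

lemma measurable_coord_s15 {S : Type} (k : ℕ) (P : S → Prop) :
    MeasurableSet[trajMS S] {ω : ℕ → S | P (ω k)} := by
  let _ : MeasurableSpace S := ⊤
  have h : Measurable (fun ω : ℕ → S => ω k) := measurable_pi_apply k
  exact h (t := {a | P a}) MeasurableSpace.measurableSet_top

lemma measurableSet_cyl {S : Type} (n : ℕ) (f : ℕ → S) :
    MeasurableSet[trajMS S] (cyl n f) := by
  have : cyl n f = ⋂ k, ⋂ (_ : k ≤ n), {ω : ℕ → S | ω k = f k} := by
    ext ω; simp [cyl]
  rw [this]
  exact MeasurableSet.iInter fun k => MeasurableSet.iInter fun _ =>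
    measurable_coord_s15 k (fun a => a = f k)

lemma measurable_of_coord {S : Type} {g : (ℕ → S) → (ℕ → S)}
    (h : ∀ k (A : Set S), MeasurableSet[trajMS S] {ω | g ω k ∈ A}) :
    @Measurable _ _ (trajMS S) (trajMS S) g := by
  let _ : MeasurableSpace S := ⊤
  let _ : MeasurableSpace (ℕ → S) := trajMS S
  exact measurable_pi_iff.2 fun k A _ => h k A

/-- Over a countable state space, cylinders generate the product σ-algebra. -/
lemma trajMS_eq_generateFrom (S : Type) [Countable S] :
    trajMS S = MeasurableSpace.generateFrom {s | ∃ n f, s = cyl (S := S) n f} := by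
  apply le_antisymm
  · refine iSup_le fun k => ?_
    rintro _ ⟨A, -, rfl⟩
    have : (fun ω : ℕ → S => ω k) ⁻¹' A =
        ⋃ (f : Fin (k + 1) → S), ⋃ (_ : f (Fin.ofNat (k + 1) k) ∈ A),
          cyl k (fun j => f (Fin.ofNat (k + 1) j)) := by
      ext ω
      simp only [Set.mem_preimage, Set.mem_iUnion, cyl, Set.mem_ofPred_eq, exists_prop]
      constructor
      · intro h
        refine ⟨fun i => ω i, ?_, fun j hj => ?_⟩
        · simpa [Fin.ofNat] using h
        · simp [Fin.ofNat, Nat.mod_eq_of_lt (Nat.lt_succ_of_le hj)]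
      · rintro ⟨f, hf, h⟩
        rw [h k le_rfl]; exact hf
    rw [this]
    exact MeasurableSet.iUnion fun f => MeasurableSet.iUnion fun _ =>
      MeasurableSpace.measurableSet_generateFrom ⟨_, _, rfl⟩
  · refine MeasurableSpace.generateFrom_le ?_
    rintro _ ⟨n, f, rfl⟩
    exact measurableSet_cyl n f

lemma cyl_isPiSystem (S : Type) : IsPiSystem {s | ∃ n f, s = cyl (S := S) n f} := by
  rintro _ ⟨n, f, rfl⟩ _ ⟨m, g, rfl⟩ ⟨ω, h1, h2⟩
  refine ⟨max n m, ω, ?_⟩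
  ext ω'
  simp only [cyl, Set.mem_inter_iff, Set.mem_ofPred_eq] at *
  constructor
  · rintro ⟨a, b⟩ k hk
    rcases le_max_iff.1 hk with hk | hk
    · rw [a k hk, h1 k hk]
    · rw [b k hk, h2 k hk]
  · intro a
    exact ⟨fun k hk => (a k (le_max_of_le_left hk)).trans (h1 k hk),
      fun k hk => (a k (le_max_of_le_right hk)).trans (h2 k hk)⟩

/-- The law of a Markov chain on a countable state space is unique. -/
lemma IsRandomWalk.unique {S : Type} [Countable S] {p : S → S → ℝ} {x : S}
    {μ ν : TrajMeasure S} (hμ : IsRandomWalk p x μ) (hν : IsRandomWalk p x ν) : μ = ν := by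
  have : @IsFiniteMeasure _ (trajMS S) μ := ⟨by rw [hμ.1]; exact ENNReal.one_lt_top⟩
  refine ext_of_generate_finite _ (trajMS_eq_generateFrom S) (cyl_isPiSystem S) ?_ ?_
  · rintro _ ⟨n, f, rfl⟩
    exact (hμ.2 n f).trans (hν.2 n f).symm
  · rw [hμ.1, hν.1]

/-- The one-step Markov property on cylinders. -/
lemma IsRandomWalk.cyl_succ {S : Type} {p : S → S → ℝ} {x : S}
    {μ : TrajMeasure S} (hμ : IsRandomWalk p x μ) (n : ℕ) (f : ℕ → S) (y : S) :
    μ (cyl (n + 1) (Function.update f (n + 1) y)) =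
      μ (cyl n f) * ENNReal.ofReal (p (f n) y) := by
  have h1 := hμ.2 n f
  have h2 := hμ.2 (n + 1) (Function.update f (n + 1) y)
  unfold cyl
  rw [h1, h2, Finset.prod_range_succ, mul_assoc]
  have h3 : ∀ k ∈ Finset.range n,
      ENNReal.ofReal (p (Function.update f (n + 1) y k) (Function.update f (n + 1) y (k + 1))) =
        ENNReal.ofReal (p (f k) (f (k + 1))) := by
    intro k hk
    have := Finset.mem_range.1 hk
    rw [Function.update_of_ne (by omega), Function.update_of_ne (by omega)]
  rw [Finset.prod_congr rfl h3, Function.update_of_ne (by omega), Function.update_of_ne (by omega),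
    Function.update_self]

lemma mem_cyl_update {S : Type} (n : ℕ) (f : ℕ → S) (y : S) (ω : ℕ → S) :
    ω ∈ cyl (n + 1) (Function.update f (n + 1) y) ↔ ω ∈ cyl n f ∧ ω (n + 1) = y := by
  simp only [cyl, Set.mem_ofPred_eq]
  constructor
  · intro h
    refine ⟨fun k hk => ?_, ?_⟩
    · rw [h k (by omega), Function.update_of_ne (by omega)]
    · rw [h _ le_rfl, Function.update_self]
  · rintro ⟨h1, h2⟩ k hk
    rcases Nat.lt_or_eq_of_le hk with hk | rfl
    · rw [h1 k (by omega), Function.update_of_ne (by omega)]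
    · rw [h2, Function.update_self]

lemma IsRandomWalk.ae_start {S : Type} {p : S → S → ℝ} {x : S}
    {μ : TrajMeasure S} (hμ : IsRandomWalk p x μ) : ∀ᵐ ω ∂μ, ω 0 = x := by
  have : @IsProbabilityMeasure _ (trajMS S) μ := ⟨hμ.1⟩
  have h := hμ.2 0 (fun _ => x)
  simp only [Nat.le_zero, forall_eq, if_true, Finset.range_zero, Finset.prod_empty, mul_one] at h
  exact (prob_compl_eq_zero_iff (measurable_coord_s15 0 (fun a => a = x))).2 h

/-! ### Hitting times -/

lemma sInf_coe_lt_sInf_coe (p q : ℕ → Prop) :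
    sInf {n : ℕ∞ | ∃ k : ℕ, (k : ℕ∞) = n ∧ p k} < sInf {n : ℕ∞ | ∃ k : ℕ, (k : ℕ∞) = n ∧ q k} ↔
      ∃ k, p k ∧ ∀ j ≤ k, ¬ q j := by
  rw [sInf_lt_iff]
  constructor
  · rintro ⟨_, ⟨k, rfl, hk⟩, hlt⟩
    refine ⟨k, hk, fun j hj hq => ?_⟩
    have : sInf {n : ℕ∞ | ∃ k : ℕ, (k : ℕ∞) = n ∧ q k} ≤ (j : ℕ∞) := sInf_le ⟨j, rfl, hq⟩
    exact absurd (hlt.trans_le this) (not_lt.2 (by exact_mod_cast hj))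
  · rintro ⟨k, hk, h⟩
    refine ⟨k, ⟨k, rfl, hk⟩, ?_⟩
    have : ((k + 1 : ℕ) : ℕ∞) ≤ sInf {n : ℕ∞ | ∃ k : ℕ, (k : ℕ∞) = n ∧ q k} := by
      refine le_sInf ?_
      rintro _ ⟨j, rfl, hj⟩
      have : k + 1 ≤ j := by
        by_contra hc
        exact h j (by omega) hj
      exact_mod_cast this
    exact lt_of_lt_of_le (by exact_mod_cast Nat.lt_succ_self k) this

lemma hitTime_lt_hitTime {S : Type} (a b : S) (ω : ℕ → S) :
    hitTime {a} ω < hitTime {b} ω ↔ ∃ k, ω k = a ∧ ∀ j ≤ k, ω j ≠ b := by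
  simpa [hitTime] using sInf_coe_lt_sInf_coe (fun k => ω k = a) (fun k => ω k = b)

lemma hitTime1_eq {S : Type} (b : S) (ω : ℕ → S) :
    hitTime1 {b} ω = sInf {n : ℕ∞ | ∃ k : ℕ, (k : ℕ∞) = n ∧ (1 ≤ k ∧ ω k = b)} := by
  unfold hitTime1
  congr 1
  ext n
  simp only [Set.mem_ofPred_eq, Set.mem_singleton_iff]
  exact exists_congr fun k => by tauto

lemma hitTime_eq {S : Type} (a : S) (ω : ℕ → S) :
    hitTime {a} ω = sInf {n : ℕ∞ | ∃ k : ℕ, (k : ℕ∞) = n ∧ ω k = a} := rfl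

lemma hitTime_eq_top {S : Type} (a : S) (ω : ℕ → S) :
    hitTime {a} ω = ⊤ ↔ ∀ k, ω k ≠ a := by
  rw [hitTime_eq, sInf_eq_top]
  constructor
  · intro h k hk
    exact ENat.natCast_ne_top k (h k ⟨k, rfl, hk⟩)
  · rintro h _ ⟨k, rfl, hk⟩
    exact absurd hk (h k)

/-- One step of the shift turns `τ_a < τ_b⁺` into `τ_a < τ_b` when the start is not `a`. -/
lemma hitTime_lt_hitTime1_iff_shift {S : Type} {a b : S} {ω : ℕ → S} (h0 : ω 0 ≠ a) :
    hitTime {a} ω < hitTime1 {b} ω ↔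
      hitTime {a} (fun k => ω (k + 1)) < hitTime {b} (fun k => ω (k + 1)) := by
  rw [hitTime_lt_hitTime, hitTime1_eq, hitTime_eq, sInf_coe_lt_sInf_coe]
  constructor
  · rintro ⟨_ | k, hk, h⟩
    · exact absurd hk h0
    · exact ⟨k, hk, fun j hj hb => h (j + 1) (by omega) ⟨by omega, hb⟩⟩
  · rintro ⟨k, hk, h⟩
    refine ⟨k + 1, hk, ?_⟩
    rintro (_ | j) hj ⟨h1, hb⟩
    · omega
    · exact h j (by omega) hb

/-- One step of the shift turns `τ_a ≤ τ_b⁺` into `τ_a ≤ τ_b` when the start is not `a`. -/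
lemma hitTime_le_hitTime1_iff_shift {S : Type} {a b : S} {ω : ℕ → S} (h0 : ω 0 ≠ a) :
    hitTime {a} ω ≤ hitTime1 {b} ω ↔
      hitTime {a} (fun k => ω (k + 1)) ≤ hitTime {b} (fun k => ω (k + 1)) := by
  rw [← not_lt, ← not_lt, hitTime_lt_hitTime, hitTime1_eq, hitTime_eq, sInf_coe_lt_sInf_coe,
    not_iff_not]
  constructor
  · rintro ⟨_ | k, hk, h⟩
    · omega
    · exact ⟨k, hk.2, fun j hj hb => h (j + 1) (by omega) hb⟩
  · rintro ⟨k, hk, h⟩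
    refine ⟨k + 1, ⟨by omega, hk⟩, ?_⟩
    rintro (_ | j) hj hb
    · exact h0 hb
    · exact h j (by omega) hb

lemma hitTime_trichotomy {S : Type} {a b : S} (hab : a ≠ b) (ω : ℕ → S)
    (h1 : ¬ hitTime {a} ω < hitTime {b} ω) (h2 : ¬ hitTime {b} ω < hitTime {a} ω) :
    hitTime {b} ω = ⊤ ∧ hitTime {a} ω = ⊤ := by
  have h : hitTime {a} ω = hitTime {b} ω := le_antisymm (not_lt.1 h2) (not_lt.1 h1)
  rw [and_comm, ← h, and_self]
  by_contra hne
  have hex : ∃ k, ω k = a := by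
    by_contra hc
    exact hne ((hitTime_eq_top a ω).2 (by simpa using hc))
  refine h1 ((hitTime_lt_hitTime a b ω).2 ⟨Nat.find hex, Nat.find_spec hex, ?_⟩)
  -- a visit to `b` by the first visit to `a` would strictly precede it
  intro j hj hb
  refine h2 ((hitTime_lt_hitTime b a ω).2 ⟨j, hb, fun i hi ha => ?_⟩)
  have h3 : Nat.find hex ≤ i := Nat.find_min' hex ha
  have h4 : i = j := by omega
  subst h4
  exact hab (ha.symm.trans hb)

lemma measurableSet_hitTime_lt {S : Type} (a b : S) :
    MeasurableSet[trajMS S] {ω : ℕ → S | hitTime {a} ω < hitTime {b} ω} := by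
  have : {ω : ℕ → S | hitTime {a} ω < hitTime {b} ω} =
      ⋃ k, ({ω : ℕ → S | ω k = a} ∩ ⋂ j, ⋂ (_ : j ≤ k), {ω : ℕ → S | ω j ≠ b}) := by
    ext ω
    simp [hitTime_lt_hitTime]
  rw [this]
  exact MeasurableSet.iUnion fun k => (measurable_coord_s15 k (fun s => s = a)).inter
    (MeasurableSet.iInter fun j => MeasurableSet.iInter fun _ => measurable_coord_s15 j (fun s => s ≠ b))

/-! ### The walk on `𝒯` -/

/-- The exchange of `B` and `T`. -/
def swapBT : Bool ⊕ ℕ ≃ Bool ⊕ ℕ := Equiv.sumCongr Equiv.boolNot (Equiv.refl ℕ)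

@[simp] lemma swapBT_inl (b : Bool) : swapBT (Sum.inl b) = Sum.inl (!b) := rfl

@[simp] lemma swapBT_inr (k : ℕ) : swapBT (Sum.inr k) = Sum.inr k := rfl

lemma swapBT_swapBT (x : Bool ⊕ ℕ) : swapBT (swapBT x) = x := by
  rcases x with b | k <;> simp

lemma cT_swapBT (x y : Bool ⊕ ℕ) : cT (swapBT x) (swapBT y) = cT x y := by
  rcases x with b | k <;> rcases y with b' | k' <;> rfl

section

variable {G : WeightedGraph (Bool ⊕ ℕ)}

lemma trans_swapBT (hG : G.c = cT) (x y : Bool ⊕ ℕ) :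
    G.trans (swapBT x) (swapBT y) = G.trans x y := by
  have : G.deg (swapBT x) = G.deg x := by
    unfold WeightedGraph.deg
    rw [← swapBT.tsum_eq]
    simp only [hG, cT_swapBT]
  rw [WeightedGraph.trans, WeightedGraph.trans, this, hG, cT_swapBT]

lemma deg_inl (hG : G.c = cT) (b : Bool) : G.deg (Sum.inl b) = 1 := by
  unfold WeightedGraph.deg
  rw [hG, tsum_eq_single (Sum.inr 0)]
  · simp [cT]
  · rintro (b' | k) h
    · simp [cT]
    · simp [cT, show k ≠ 0 by rintro rfl; exact h rfl]

lemma deg_zero (hG : G.c = cT) : G.deg (Sum.inr 0) = 3 := by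
  unfold WeightedGraph.deg
  rw [hG, tsum_eq_sum (s := {Sum.inl true, Sum.inl false, Sum.inr 1})]
  · simp [cT, lineW]
    norm_num
  · rintro (b' | k) h
    · cases b' <;> simp at h
    · have : k ≠ 1 := by rintro rfl; simp at h
      simp [cT, this]

lemma deg_succ (hG : G.c = cT) (k : ℕ) : G.deg (Sum.inr (k + 1)) = lineW k + lineW (k + 1) := by
  unfold WeightedGraph.deg
  rw [hG, tsum_eq_sum (s := {Sum.inr k, Sum.inr (k + 2)})]
  · rw [Finset.sum_pair (by simp)]
    simp only [cT, if_true]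
    rw [if_neg (by omega)]
  · rintro (b' | j) h
    · simp [cT]
    · have : j ≠ k ∧ j ≠ k + 2 := by simpa using h
      have h2 : k ≠ j := fun h => this.1 h.symm
      simp [cT, this.2, h2]

lemma trans_vB (hG : G.c = cT) (y : Bool ⊕ ℕ) :
    G.trans vB y = if y = Sum.inr 0 then 1 else 0 := by
  rw [WeightedGraph.trans, vB, deg_inl hG, hG]
  rcases y with b | k <;> simp [cT]

/-- The law of the walk from `0` is invariant under the exchange of `B` and `T`. -/
lemma map_swapBT (hG : G.c = cT) {P0 : TrajMeasure (Bool ⊕ ℕ)}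
    (hP0 : IsRandomWalk G.trans (Sum.inr 0) P0)
    (hm : @Measurable _ _ (trajMS _) (trajMS _) (fun (ω : ℕ → Bool ⊕ ℕ) k => swapBT (ω k))) :
    @Measure.map _ _ (trajMS _) (trajMS _) (fun ω k => swapBT (ω k)) P0 = P0 := by
  refine IsRandomWalk.unique ⟨?_, fun n f => ?_⟩ hP0
  · rw [Measure.map_apply hm MeasurableSet.univ, Set.preimage_univ, hP0.1]
  · have h := measurableSet_cyl n f
    unfold cyl at h
    rw [Measure.map_apply hm h]
    have h2 : (fun (ω : ℕ → Bool ⊕ ℕ) k => swapBT (ω k)) ⁻¹' {ω | ∀ k ≤ n, ω k = f k} =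
        {ω | ∀ k ≤ n, ω k = swapBT (f k)} := by
      ext ω
      refine forall₂_congr fun k _ => ?_
      constructor
      · intro h; rw [← h, swapBT_swapBT]
      · intro h; simp only [h, swapBT_swapBT]
    have h3 : swapBT (f 0) = Sum.inr 0 ↔ f 0 = Sum.inr 0 := by
      rcases f 0 with b | k <;> simp
    rw [h2, hP0.2 n (fun k => swapBT (f k))]
    simp only [trans_swapBT hG, h3]
    congr

/-- The walk from `B`, shifted by one time unit, is the walk from `0`. -/
lemma map_shift (hG : G.c = cT) {P0 PB : TrajMeasure (Bool ⊕ ℕ)}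
    (hP0 : IsRandomWalk G.trans (Sum.inr 0) P0) (hPB : IsRandomWalk G.trans vB PB)
    (hm : @Measurable _ _ (trajMS _) (trajMS _) (fun (ω : ℕ → Bool ⊕ ℕ) k => ω (k + 1))) :
    @Measure.map _ _ (trajMS _) (trajMS _) (fun ω k => ω (k + 1)) PB = P0 := by
  refine IsRandomWalk.unique ⟨?_, fun n f => ?_⟩ hP0
  · rw [Measure.map_apply hm MeasurableSet.univ, Set.preimage_univ, hPB.1]
  · have h := measurableSet_cyl n f
    unfold cyl at h
    rw [Measure.map_apply hm h]
    let g : ℕ → Bool ⊕ ℕ := fun k => Nat.casesOn k vB f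
    have h2 : PB ((fun (ω : ℕ → Bool ⊕ ℕ) k => ω (k + 1)) ⁻¹' {ω | ∀ k ≤ n, ω k = f k}) =
        PB {ω | ∀ k ≤ n + 1, ω k = g k} := by
      refine measure_congr ?_
      filter_upwards [hPB.ae_start] with ω h0
      refine propext ⟨fun h k hk => ?_, fun h k hk => h (k + 1) (Nat.succ_le_succ hk)⟩
      rcases k with _ | k
      · exact h0
      · exact h k (by omega)
    rw [h2, hPB.2 (n + 1) g, Finset.prod_range_succ']
    have h4 : g 0 = vB := rfl
    have h5 : ∀ k, g (k + 1) = f k := fun _ => rfl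
    simp only [h4, h5, zero_add, if_true, one_mul, trans_vB hG]
    rw [mul_comm]
    congr 1
    split_ifs <;> simp

/-! ### Transience -/

/-- The function that vanishes on `{B, T}` and is harmonic on `ℕ₀` with limit `1` at infinity. -/
noncomputable def hT : Bool ⊕ ℕ → ℝ
  | Sum.inl _ => 0
  | Sum.inr 0 => 1 / 7
  | Sum.inr (k + 1) => 1 - 4 / 7 * (1 / 2) ^ k

lemma hT_nonneg (x : Bool ⊕ ℕ) : 0 ≤ hT x := by
  rcases x with b | _ | k
  · simp [hT]
  · norm_num [hT]
  · have : ((1 : ℝ) / 2) ^ k ≤ 1 := pow_le_one₀ (by norm_num) (by norm_num)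
    simp only [hT]; linarith

lemma hT_le_one (x : Bool ⊕ ℕ) : hT x ≤ 1 := by
  rcases x with b | _ | k
  · simp [hT]
  · norm_num [hT]
  · have : (0 : ℝ) < (1 / 2) ^ k := by positivity
    simp only [hT]; linarith

lemma hT_zero (hG : G.c = cT) :
    hT (Sum.inr 0) = G.trans (Sum.inr 0) (Sum.inr 1) * hT (Sum.inr 1) := by
  rw [WeightedGraph.trans, deg_zero hG, hG]
  simp [cT, lineW, hT]
  norm_num

lemma hT_succ (hG : G.c = cT) (k : ℕ) :
    hT (Sum.inr (k + 1)) = G.trans (Sum.inr (k + 1)) (Sum.inr k) * hT (Sum.inr k) +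
      G.trans (Sum.inr (k + 1)) (Sum.inr (k + 2)) * hT (Sum.inr (k + 2)) := by
  rw [WeightedGraph.trans, WeightedGraph.trans, deg_succ hG, hG]
  rcases k with _ | k
  · simp [cT, lineW, hT]
    norm_num
  · have h2 : (2 : ℝ) ^ k ≠ 0 := by positivity
    have h3 : (2 : ℝ) ^ k * 3 ≠ 0 := by positivity
    simp [cT, lineW, hT, pow_succ]
    field_simp
    ring

lemma trans_nonneg' (G : WeightedGraph (Bool ⊕ ℕ)) (x y : Bool ⊕ ℕ) : 0 ≤ G.trans x y :=
  div_nonneg (G.nonneg _ _) (tsum_nonneg fun _ => G.nonneg _ _)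

/-- The trajectories in `cyl m f` that avoid `B` and `T` at the times `m, …, m + n`. -/
def windowT (m n : ℕ) (f : ℕ → Bool ⊕ ℕ) : Set (ℕ → Bool ⊕ ℕ) :=
  cyl m f ∩ {ω | ∀ k, m ≤ k → k ≤ m + n → ∃ i, ω k = Sum.inr i}

lemma measurableSet_windowT (m n : ℕ) (f : ℕ → Bool ⊕ ℕ) :
    MeasurableSet[trajMS _] (windowT m n f) := by
  refine (measurableSet_cyl m f).inter ?_
  have : {ω : ℕ → Bool ⊕ ℕ | ∀ k, m ≤ k → k ≤ m + n → ∃ i, ω k = Sum.inr i} =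
      ⋂ k, ⋂ (_ : m ≤ k), ⋂ (_ : k ≤ m + n), {ω | ∃ i, ω k = Sum.inr i} := by
    ext ω; simp
  rw [this]
  exact MeasurableSet.iInter fun k => MeasurableSet.iInter fun _ => MeasurableSet.iInter fun _ =>
    measurable_coord_s15 k (fun s => ∃ i, s = Sum.inr i)

lemma windowT_update_subset {m n : ℕ} {f : ℕ → Bool ⊕ ℕ} {i : ℕ} (hi : f m = Sum.inr i)
    (y : Bool ⊕ ℕ) : windowT (m + 1) n (Function.update f (m + 1) y) ⊆ windowT m (n + 1) f := by
  rintro ω ⟨h1, h2⟩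
  rw [mem_cyl_update] at h1
  refine ⟨h1.1, fun k hk hk' => ?_⟩
  rcases hk.eq_or_lt with rfl | hk
  · exact ⟨i, (h1.1 m le_rfl).trans hi⟩
  · exact h2 k hk (by omega)

/-- Given an initial segment `f 0, …, f m`, the walk stays in `ℕ₀` during the following `n` steps
with conditional probability at least `hT (f m)`. -/
lemma escape_window (hG : G.c = cT) {x : Bool ⊕ ℕ} {μ : TrajMeasure (Bool ⊕ ℕ)}
    (hμ : IsRandomWalk G.trans x μ) (n : ℕ) : ∀ (m : ℕ) (f : ℕ → Bool ⊕ ℕ),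
    μ (cyl m f) * ENNReal.ofReal (hT (f m)) ≤ μ (windowT m n f) := by
  induction n with
  | zero =>
    intro m f
    rcases hfm : f m with b | i
    · simp [hT]
    · have : windowT m 0 f = cyl m f := by
        refine Set.inter_eq_left.2 fun ω hω k hk hk' => ⟨i, ?_⟩
        obtain rfl : k = m := by omega
        rw [hω k le_rfl, hfm]
      rw [this]
      calc μ (cyl m f) * ENNReal.ofReal (hT (Sum.inr i)) ≤ μ (cyl m f) * 1 := by
            gcongr
            exact ENNReal.ofReal_le_one.2 (hT_le_one _)
        _ = _ := mul_one _
  | succ n ih =>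
    intro m f
    -- the bound for paths that continue from `f m` to `y`
    have step : ∀ y, μ (cyl m f) * ENNReal.ofReal (G.trans (f m) y * hT y) ≤
        μ (windowT (m + 1) n (Function.update f (m + 1) y)) := by
      intro y
      have := ih (m + 1) (Function.update f (m + 1) y)
      rwa [hμ.cyl_succ, Function.update_self, mul_assoc,
        ← ENNReal.ofReal_mul (trans_nonneg' G _ _)] at this
    rcases hfm : f m with b | _ | i
    · simp [hT]
    · rw [hT_zero hG]
      rw [hfm] at step
      exact (step _).trans (measure_mono (windowT_update_subset hfm _))
    · rw [hfm] at step
      rw [hT_succ hG, ENNReal.ofReal_add (mul_nonneg (trans_nonneg' G _ _) (hT_nonneg _))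
        (mul_nonneg (trans_nonneg' G _ _) (hT_nonneg _)), mul_add]
      refine (add_le_add (step _) (step _)).trans ?_
      rw [← measure_union _ (measurableSet_windowT _ _ _)]
      · exact measure_mono (Set.union_subset (windowT_update_subset hfm _)
          (windowT_update_subset hfm _))
      · rw [Set.disjoint_left]
        rintro ω ⟨h1, -⟩ ⟨h2, -⟩
        rw [mem_cyl_update] at h1 h2
        have := h1.2.symm.trans h2.2
        simp at this

/-- The walk from `0` avoids `B` and `T` forever with positive probability. -/
lemma escape_pos (hG : G.c = cT) {P0 : TrajMeasure (Bool ⊕ ℕ)}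
    (hP0 : IsRandomWalk G.trans (Sum.inr 0) P0) :
    0 < P0 {ω | hitTime {vB} ω = ⊤ ∧ hitTime {vT} ω = ⊤} := by
  have : @IsProbabilityMeasure _ (trajMS _) P0 := ⟨hP0.1⟩
  have hcyl : P0 (cyl 0 (fun _ => Sum.inr 0)) = 1 := by
    have h := hP0.2 0 (fun _ => Sum.inr 0)
    unfold cyl
    rw [h]; simp
  have hlow : ∀ n, ENNReal.ofReal (1 / 7) ≤ P0 (windowT 0 n (fun _ => Sum.inr 0)) := by
    intro n
    have := escape_window hG hP0 n 0 (fun _ => Sum.inr 0)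
    rwa [hcyl, one_mul] at this
  have hanti : Antitone (fun n => windowT 0 n (fun _ => Sum.inr 0)) := by
    rintro n n' hn ω ⟨h1, h2⟩
    exact ⟨h1, fun k hk hk' => h2 k hk (by omega)⟩
  have hlim := tendsto_measure_iInter_atTop (μ := P0)
    (fun n => (measurableSet_windowT 0 n (fun _ => Sum.inr 0)).nullMeasurableSet) hanti
    ⟨0, measure_ne_top _ _⟩
  have h7 := ge_of_tendsto' hlim hlow
  refine lt_of_lt_of_le (ENNReal.ofReal_pos.2 (by norm_num)) (h7.trans (measure_mono ?_))
  intro ω hω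
  have hω' : ∀ k, ∃ i, ω k = Sum.inr i := fun k =>
    (Set.mem_iInter.1 hω k).2 k (Nat.zero_le _) (by omega)
  rw [Set.mem_ofPred_eq, hitTime_eq_top, hitTime_eq_top]
  refine ⟨fun k => ?_, fun k => ?_⟩ <;> obtain ⟨i, hi⟩ := hω' k <;> rw [hi] <;> simp [vB, vT]

end

/-- For the random walk on `𝒯` started at vertex `0`:
`P_0[τ_B < τ_T] = P_0[τ_T < τ_B] = (1 − P_0[τ_B = τ_T = ∞])/2 < 1/2`, and consequently
`P_B[τ_T < τ_B⁺] = P_0[τ_T < τ_B] < 1/2` and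
`P_B[τ_T ≤ τ_B⁺] = P_0[τ_T ≤ τ_B] = (1 + P_0[τ_B = τ_T = ∞])/2 > 1/2`. -/
theorem graphT_symmetry_probs
    (G : WeightedGraph (Bool ⊕ ℕ)) (hG : G.c = cT)
    (P0 : TrajMeasure (Bool ⊕ ℕ)) (hP0 : IsRandomWalk G.trans (Sum.inr 0) P0)
    (PB : TrajMeasure (Bool ⊕ ℕ)) (hPB : IsRandomWalk G.trans vB PB) :
    PB {ω | hitTime {vT} ω < hitTime1 {vB} ω} =
      P0 {ω | hitTime {vT} ω < hitTime {vB} ω} ∧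
    P0 {ω | hitTime {vB} ω < hitTime {vT} ω} =
      P0 {ω | hitTime {vT} ω < hitTime {vB} ω} ∧
    P0 {ω | hitTime {vT} ω < hitTime {vB} ω} =
      (1 - P0 {ω | hitTime {vB} ω = ⊤ ∧ hitTime {vT} ω = ⊤}) / 2 ∧
    P0 {ω | hitTime {vT} ω < hitTime {vB} ω} < 1 / 2 ∧
    PB {ω | hitTime {vT} ω ≤ hitTime1 {vB} ω} =
      P0 {ω | hitTime {vT} ω ≤ hitTime {vB} ω} ∧
    P0 {ω | hitTime {vT} ω ≤ hitTime {vB} ω} =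
      (1 + P0 {ω | hitTime {vB} ω = ⊤ ∧ hitTime {vT} ω = ⊤}) / 2 ∧
    (1 / 2 : ℝ≥0∞) < P0 {ω | hitTime {vT} ω ≤ hitTime {vB} ω} := by
  have : @IsProbabilityMeasure _ (trajMS _) P0 := ⟨hP0.1⟩
  have hBT : vT ≠ vB := by simp [vB, vT]
  have hms : @Measurable _ _ (trajMS _) (trajMS _)
      (fun (ω : ℕ → Bool ⊕ ℕ) k => swapBT (ω k)) :=
    measurable_of_coord fun k A => measurable_coord_s15 k (fun a => swapBT a ∈ A)
  have hmt : @Measurable _ _ (trajMS _) (trajMS _) (fun (ω : ℕ → Bool ⊕ ℕ) k => ω (k + 1)) :=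
    measurable_of_coord fun k A => measurable_coord_s15 (k + 1) (fun a => a ∈ A)
  have hle : ∀ a b : Bool ⊕ ℕ, MeasurableSet[trajMS _]
      {ω : ℕ → Bool ⊕ ℕ | hitTime {a} ω ≤ hitTime {b} ω} := by
    intro a b
    simpa only [Set.compl_ofPred, not_lt] using (measurableSet_hitTime_lt b a).compl
  have hstart : ∀ᵐ ω ∂PB, ω 0 ≠ vT := by
    filter_upwards [hPB.ae_start] with ω h
    rw [h]; exact hBT.symm
  have hsym : P0 {ω | hitTime {vB} ω < hitTime {vT} ω} =
      P0 {ω | hitTime {vT} ω < hitTime {vB} ω} := by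
    conv_rhs => rw [← map_swapBT hG hP0 hms]
    rw [Measure.map_apply hms (measurableSet_hitTime_lt _ _)]
    congr 1
    ext ω
    have hswB : ∀ x, swapBT x = vT ↔ x = vB := by rintro (b | k) <;> simp [vB, vT]
    have hswT : ∀ x, swapBT x = vB ↔ x = vT := by rintro (b | k) <;> simp [vB, vT]
    simp only [Set.mem_ofPred_eq, Set.mem_preimage, hitTime_lt_hitTime, ne_eq, hswB, hswT]
  have hshift_lt : PB {ω | hitTime {vT} ω < hitTime1 {vB} ω} =
      P0 {ω | hitTime {vT} ω < hitTime {vB} ω} := by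
    rw [← map_shift hG hP0 hPB hmt, Measure.map_apply hmt (measurableSet_hitTime_lt _ _)]
    refine measure_congr ?_
    filter_upwards [hstart] with ω h
    exact propext (hitTime_lt_hitTime1_iff_shift h)
  have hshift_le : PB {ω | hitTime {vT} ω ≤ hitTime1 {vB} ω} =
      P0 {ω | hitTime {vT} ω ≤ hitTime {vB} ω} := by
    rw [← map_shift hG hP0 hPB hmt, Measure.map_apply hmt (hle _ _)]
    refine measure_congr ?_
    filter_upwards [hstart] with ω h
    exact propext (hitTime_le_hitTime1_iff_shift h)
  have hpos := escape_pos hG hP0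
  -- `{τ_T ≤ τ_B}` is the disjoint union of `{τ_T < τ_B}` and the escape event
  have hsplit : P0 {ω | hitTime {vT} ω ≤ hitTime {vB} ω} =
      P0 {ω | hitTime {vT} ω < hitTime {vB} ω} +
        P0 {ω | hitTime {vB} ω = ⊤ ∧ hitTime {vT} ω = ⊤} := by
    rw [← measure_union' _ (measurableSet_hitTime_lt _ _)]
    · congr 1
      ext ω
      simp only [Set.mem_ofPred_eq, Set.mem_union]
      constructor
      · intro h
        by_cases h1 : hitTime {vT} ω < hitTime {vB} ω
        · exact Or.inl h1
        · exact Or.inr (hitTime_trichotomy hBT ω h1 (not_lt.2 h))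
      · rintro (h | h)
        · exact h.le
        · rw [h.1]; exact le_top
    · rw [Set.disjoint_left]
      rintro ω h ⟨h1, h2⟩
      rw [Set.mem_ofPred_eq, h1, h2] at h
      exact lt_irrefl _ h
  have htotal : P0 {ω | hitTime {vB} ω < hitTime {vT} ω} +
      P0 {ω | hitTime {vT} ω ≤ hitTime {vB} ω} = 1 := by
    have := prob_add_prob_compl (μ := P0) (measurableSet_hitTime_lt vB vT)
    simpa only [Set.compl_ofPred, not_lt] using this
  rw [hsym, hsplit] at htotal
  refine ⟨hshift_lt, hsym, ?_, ?_, hshift_le, ?_, ?_⟩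
  all_goals try rw [hsplit]
  all_goals
    have hA := measure_ne_top P0 {ω | hitTime {vT} ω < hitTime {vB} ω}
    have hE := measure_ne_top P0 {ω | hitTime {vB} ω = ⊤ ∧ hitTime {vT} ω = ⊤}
    generalize P0 {ω | hitTime {vT} ω < hitTime {vB} ω} = a at *
    generalize P0 {ω | hitTime {vB} ω = ⊤ ∧ hitTime {vT} ω = ⊤} = e at *
    lift a to NNReal using hA
    lift e to NNReal using hE
    have hr : (a : ℝ) + (a + e) = 1 := by exact_mod_cast htotal
    have he : (0 : ℝ) < e := by exact_mod_cast hpos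
  · rw [ENNReal.eq_div_iff (by norm_num) (by norm_num)]
    refine ENNReal.eq_sub_of_add_eq (by simp) ?_
    rw [← htotal]; ring
  · rw [ENNReal.lt_div_iff_mul_lt (by norm_num) (by norm_num)]
    have : a * 2 < 1 := by rw [← NNReal.coe_lt_coe]; push_cast; linarith
    exact_mod_cast this
  · rw [ENNReal.eq_div_iff (by norm_num) (by norm_num), ← htotal]
    ring
  · rw [ENNReal.div_lt_iff (by norm_num) (by norm_num)]
    have : 1 < (a + e) * 2 := by rw [← NNReal.coe_lt_coe]; push_cast; linarith
    exact_mod_cast this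
end
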